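/- arXiv:hep-lat/0202025 — 9 statements merged into one kernel-verified Lean document; each statement's English description precedes it below -/
import Mathlib

section
/- Let Q be an n×n invertible Hermitian complex matrix and b ∈ ℂⁿ. Define b⁺ = ½(I + sign(Q))b and b⁻ = ½(I − sign(Q))b. For k ≥ 0 let ρ⁺_{k+1} = min{‖p(Q)b⁺‖₂ : p a polynomial of degree ≤ k+1 with p(0) = 1} and ρ⁻_{k+1} = min{‖p(Q)b⁻‖₂ : p a polynomial of degree ≤ k+1 with p(0) = 1} (the GMRES residual norms at step k+1 for the systems Qx = b⁺ and Qx = b⁻ with zero initial guess). Then for every polynomial q_k of degree ≤ k one has ‖sign(Q)b − Q q_k(Q) b‖₂² ≥ (ρ⁺_{k+1})² + (ρ⁻_{k+1})². -/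
/-! With `S = sign Q` one has `Sᴴ = S`, `S² = 1` and `S` commutes with every `p(Q)`. Since
`b = b⁺ + b⁻` and `S b = b⁺ - b⁻`, the error splits as
`S b - Q q(Q) b = (1 - X q)(Q) b⁺ - (1 + X q)(Q) b⁻`. The two summands lie in the `+1` and `-1`
eigenspaces of the Hermitian matrix `S`, so they are orthogonal and Pythagoras applies; both
polynomials have degree at most `k + 1` and value `1` at `0`, so each summand is at least the
corresponding GMRES residual. -/

open Matrix Polynomial

/-- The Euclidean (l2) norm on `ℂⁿ`. -/
noncomputable def e2norm {n : ℕ} (x : Fin n → ℂ) : ℝ :=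
  Real.sqrt (∑ i, ‖x i‖ ^ 2)

theorem e2norm_sq {n : ℕ} (x : Fin n → ℂ) : e2norm x ^ 2 = ∑ i, ‖x i‖ ^ 2 :=
  Real.sq_sqrt (Finset.sum_nonneg fun _ _ => sq_nonneg _)

theorem ofReal_e2norm_sq {n : ℕ} (x : Fin n → ℂ) : ((e2norm x ^ 2 : ℝ) : ℂ) = star x ⬝ᵥ x := by
  rw [e2norm_sq]
  simp [dotProduct, Complex.conj_mul']

theorem e2norm_sub_sq {n : ℕ} (u v : Fin n → ℂ) (h : star u ⬝ᵥ v = 0) :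
    e2norm (u - v) ^ 2 = e2norm u ^ 2 + e2norm v ^ 2 := by
  have h' : star v ⬝ᵥ u = 0 := by
    rw [star_dotProduct, h, star_zero]
  apply Complex.ofReal_injective
  rw [Complex.ofReal_add]
  simp only [ofReal_e2norm_sq, star_sub, sub_dotProduct, dotProduct_sub, h, h']
  ring

/-- Eigenvectors of a Hermitian matrix for the eigenvalues `1` and `-1` are orthogonal. -/
theorem dotProduct_eq_zero_of_sign {n : ℕ} {S : Matrix (Fin n) (Fin n) ℂ} (hS : S.IsHermitian)
    {u v : Fin n → ℂ} (hu : S *ᵥ u = u) (hv : S *ᵥ v = -v) : star u ⬝ᵥ v = 0 := by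
  have h : star u ⬝ᵥ v = -(star u ⬝ᵥ v) := by
    calc star u ⬝ᵥ v = star (S *ᵥ u) ⬝ᵥ v := by rw [hu]
      _ = star u ⬝ᵥ (S *ᵥ v) := by rw [star_mulVec, hS.eq, dotProduct_mulVec]
      _ = -(star u ⬝ᵥ v) := by rw [hv, dotProduct_neg]
  exact self_eq_neg.mp h

theorem sign_isHermitian {n : ℕ} {Q : Matrix (Fin n) (Fin n) ℂ} (hQ : Q.IsHermitian) :
    (hQ.cfc Real.sign).IsHermitian := by
  rw [← hQ.cfc_eq]
  exact cfc_predicate (R := ℝ) (p := IsSelfAdjoint) Real.sign Q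

theorem sign_commute {n : ℕ} {Q : Matrix (Fin n) (Fin n) ℂ} (hQ : Q.IsHermitian) :
    Commute (hQ.cfc Real.sign) Q := by
  rw [← hQ.cfc_eq]
  have h := cfc_commute_cfc (R := ℝ) Real.sign id Q
  rwa [cfc_id ℝ Q hQ.isSelfAdjoint] at h

/-- Invertibility keeps `0`, where `Real.sign` vanishes, out of the spectrum. -/
theorem cfc_sign_mul_self {n : ℕ} {Q : Matrix (Fin n) (Fin n) ℂ} (hQ : Q.IsHermitian)
    (hinv : IsUnit Q.det) : hQ.cfc Real.sign * hQ.cfc Real.sign = 1 := by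
  have hc : ContinuousOn Real.sign (spectrum ℝ Q) := (Matrix.finite_real_spectrum).continuousOn _
  rw [← hQ.cfc_eq, ← cfc_mul Real.sign Real.sign Q hc hc, ← cfc_one ℝ Q hQ.isSelfAdjoint]
  refine cfc_congr fun x hx => ?_
  have hx0 : x ≠ 0 := by
    rintro rfl
    exact spectrum.zero_notMem ℝ ((Matrix.isUnit_iff_isUnit_det Q).2 hinv) hx
  rcases Real.sign_apply_eq_of_ne_zero x hx0 with h | h <;> simp [h]

/-- The GMRES infimum, being over a set of nonnegative reals, is bounded by each residual. -/
theorem sInf_residual_sq_le {n : ℕ} (Q : Matrix (Fin n) (Fin n) ℂ) (c : Fin n → ℂ) (d : ℕ)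
    (p : Polynomial ℂ) (hd : p.natDegree ≤ d) (h0 : p.eval 0 = 1) :
    sInf {s : ℝ | ∃ p : Polynomial ℂ, p.natDegree ≤ d ∧ p.eval 0 = 1 ∧
      s = e2norm ((Polynomial.aeval Q p) *ᵥ c)} ^ 2 ≤ e2norm ((Polynomial.aeval Q p) *ᵥ c) ^ 2 := by
  have hnn : ∀ s ∈ {s : ℝ | ∃ p : Polynomial ℂ, p.natDegree ≤ d ∧ p.eval 0 = 1 ∧
      s = e2norm ((Polynomial.aeval Q p) *ᵥ c)}, 0 ≤ s := by
    rintro s ⟨p, -, -, rfl⟩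
    exact Real.sqrt_nonneg _
  exact pow_le_pow_left₀ (Real.sInf_nonneg hnn) (csInf_le ⟨0, hnn⟩ ⟨p, hd, h0, rfl⟩) 2

/-- For an invertible Hermitian `Q`, with `sign Q` the matrix sign function
(defined via the functional calculus), `b⁺ = ½(I + sign Q)b`, `b⁻ = ½(I - sign Q)b`, and
`ρ⁺`, `ρ⁻` the GMRES residual norms at step `k+1` for `Qx = b⁺` resp. `Qx = b⁻`, every
approximation of the form `Q qₖ(Q) b` with `deg qₖ ≤ k` satisfies
`‖sign(Q)b − Q qₖ(Q) b‖² ≥ (ρ⁺)² + (ρ⁻)²`. -/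
theorem lanczos_sign_lower_bound {n : ℕ}
    (Q : Matrix (Fin n) (Fin n) ℂ) (hQ : Q.IsHermitian) (hQinv : IsUnit Q.det)
    (b : Fin n → ℂ) (k : ℕ)
    (signQ : Matrix (Fin n) (Fin n) ℂ) (hsign : signQ = hQ.cfc Real.sign)
    (bp bm : Fin n → ℂ)
    (hbp : bp = (2 : ℂ)⁻¹ • (((1 : Matrix (Fin n) (Fin n) ℂ) + signQ) *ᵥ b))
    (hbm : bm = (2 : ℂ)⁻¹ • (((1 : Matrix (Fin n) (Fin n) ℂ) - signQ) *ᵥ b))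
    (ρp ρm : ℝ)
    (hρp : ρp = sInf {s : ℝ | ∃ p : Polynomial ℂ, p.natDegree ≤ k + 1 ∧ p.eval 0 = 1 ∧
      s = e2norm ((Polynomial.aeval Q p) *ᵥ bp)})
    (hρm : ρm = sInf {s : ℝ | ∃ p : Polynomial ℂ, p.natDegree ≤ k + 1 ∧ p.eval 0 = 1 ∧
      s = e2norm ((Polynomial.aeval Q p) *ᵥ bm)}) :
    ∀ q : Polynomial ℂ, q.natDegree ≤ k →
      e2norm (signQ *ᵥ b - Q *ᵥ ((Polynomial.aeval Q q) *ᵥ b)) ^ 2 ≥ ρp ^ 2 + ρm ^ 2 := by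
  intro q hq
  have hS : signQ.IsHermitian := hsign ▸ sign_isHermitian hQ
  have hcomm : Commute signQ Q := hsign ▸ sign_commute hQ
  have hSS : signQ * signQ = 1 := hsign ▸ cfc_sign_mul_self hQ hQinv
  have hSp : signQ *ᵥ bp = bp := by
    rw [hbp, mulVec_smul, mulVec_mulVec, mul_add, hSS, mul_one, add_comm]
  have hSm : signQ *ᵥ bm = -bm := by
    rw [hbm, mulVec_smul, mulVec_mulVec, mul_sub, hSS, mul_one, ← smul_neg, ← neg_mulVec, neg_sub]
  have hb : b = bp + bm := by
    rw [hbp, hbm, ← smul_add, ← add_mulVec, add_add_sub_cancel, add_mulVec, one_mulVec,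
      ← two_smul ℂ b, smul_smul, inv_mul_cancel₀ two_ne_zero, one_smul]
  have hp (p : Polynomial ℂ) : Commute signQ (aeval Q p) := by
    induction p using Polynomial.induction_on' with
    | add p r hp hr => rw [map_add]; exact hp.add_right hr
    | monomial m a =>
      rw [aeval_monomial]
      exact (Algebra.commute_algebraMap_right a signQ).mul_right (hcomm.pow_right m)
  have hXq : (X * q).natDegree ≤ k + 1 := by
    refine natDegree_mul_le.trans ?_
    rw [natDegree_X]
    lia
  have hu : signQ *ᵥ (aeval Q (1 - X * q) *ᵥ bp) = aeval Q (1 - X * q) *ᵥ bp := by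
    rw [mulVec_mulVec, (hp _).eq, ← mulVec_mulVec, hSp]
  have hv : signQ *ᵥ (aeval Q (1 + X * q) *ᵥ bm) = -(aeval Q (1 + X * q) *ᵥ bm) := by
    rw [mulVec_mulVec, (hp _).eq, ← mulVec_mulVec, hSm, mulVec_neg]
  have hsplit : signQ *ᵥ b - Q *ᵥ (aeval Q q *ᵥ b)
      = aeval Q (1 - X * q) *ᵥ bp - aeval Q (1 + X * q) *ᵥ bm := by
    rw [hb]
    simp only [map_sub, map_add, map_one, map_mul, aeval_X, sub_mulVec, add_mulVec, one_mulVec,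
      mulVec_add, hSp, hSm, ← mulVec_mulVec]
    abel
  rw [hsplit, e2norm_sub_sq _ _ (dotProduct_eq_zero_of_sign hS hu hv), hρp, hρm]
  refine add_le_add (sInf_residual_sq_le Q bp (k + 1) _ ?_ (by simp))
    (sInf_residual_sq_le Q bm (k + 1) _ ?_ (by simp))
  · exact (natDegree_sub_le _ _).trans (by simpa using hXq)
  · exact (natDegree_add_le _ _).trans (by simpa using hXq)
end

section
/- Let Q be an n×n Hermitian complex matrix all of whose eigenvalues lie in the real interval [α, β], and let b ∈ ℂⁿ. Let μ₁, …, μ_k be k distinct points in [α, β], let f : ℝ → ℝ be k times continuously differentiable on [α, β], let p be the polynomial of degree ≤ k−1 interpolating f at the points μ₁, …, μ_k (i.e. p(μᵢ) = f(μᵢ) for i = 1, …, k), and set q(t) = ∏_{j=1}^{k} (t − μⱼ). Then ‖q(Q)b‖₂ · inf_{t∈[α,β]} |f^{(k)}(t)/k!| ≤ ‖f(Q)b − p(Q)b‖₂ ≤ ‖q(Q)b‖₂ · sup_{t∈[α,β]} |f^{(k)}(t)/k!|. -/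
/-!
On the spectrum of `Q` the interpolation error has the classical Cauchy form
`f t - p t = q t * (f⁽ᵏ⁾(ξ) / k!)` with some `ξ ∈ [α, β]` depending on `t`
(`exists_interpolation_error_eq`). It comes from the generalized Rolle theorem
(`exists_iteratedDerivWithin_eq_zero`) applied to `x ↦ q(t) (f x - p x) - (f t - p t) q(x)`, which
vanishes at `t` and at the `k` nodes. Hence `|f - p|` lies between `|q| · inf` and `|q| · sup` at
every eigenvalue. In an orthonormal eigenbasis of `Q`, with `c` the coordinates of `b`, one has
`‖g(Q) b‖² = ∑ i, |g(λᵢ)|² |cᵢ|²` (`e2norm_cfc_mulVec`), so the eigenvalue bounds can be summed.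
-/

open Matrix Polynomial

/-- Generalized Rolle theorem: a `C^k` function on `[a, b]` with `k + 1` distinct zeros has a
zero of its `k`-th derivative, taken within `[a, b]`. -/
lemma exists_iteratedDerivWithin_eq_zero {a b : ℝ} (hab : a < b) (k : ℕ) (g : ℝ → ℝ)
    (hg : ContDiffOn ℝ k g (Set.Icc a b)) (z : Fin (k + 1) → ℝ) (hz : StrictMono z)
    (hmem : ∀ i, z i ∈ Set.Icc a b) (hzero : ∀ i, g (z i) = 0) :
    ∃ ξ ∈ Set.Icc a b, iteratedDerivWithin k g (Set.Icc a b) ξ = 0 := by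
  induction k generalizing g with
  | zero => exact ⟨z 0, hmem 0, by simpa using hzero 0⟩
  | succ k ih =>
    have hR : ∀ i : Fin (k + 1), ∃ w ∈ Set.Ioo (z i.castSucc) (z i.succ), deriv g w = 0 := by
      intro i
      refine exists_deriv_eq_zero (hz Fin.castSucc_lt_succ) (hg.continuousOn.mono ?_) ?_
      · exact Set.Icc_subset_Icc (hmem _).1 (hmem _).2
      · rw [hzero, hzero]
    choose w hw hw0 using hR
    have hwI : ∀ i, w i ∈ Set.Ioo a b := fun i =>
      ⟨(hmem _).1.trans_lt (hw i).1, (hw i).2.trans_le (hmem _).2⟩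
    rw [iteratedDerivWithin_succ']
    refine ih (derivWithin g (Set.Icc a b))
      (hg.derivWithin (uniqueDiffOn_Icc hab) (by norm_cast)) w ?_ ?_ ?_
    · intro i j hij
      have h1 : z i.succ ≤ z j.castSucc := hz.monotone (by
        rw [Fin.le_def]; simpa using Nat.succ_le_of_lt hij)
      exact (hw i).2.trans (h1.trans_lt (hw j).1)
    · exact fun i => Set.Ioo_subset_Icc_self (hwI i)
    · intro i
      rw [derivWithin_of_mem_nhds (Icc_mem_nhds (hwI i).1 (hwI i).2), hw0]

lemma iteratedDeriv_polynomial_eval (k : ℕ) (r : Polynomial ℝ) :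
    iteratedDeriv k (fun x => r.eval x) = fun x => (derivative^[k] r).eval x := by
  induction k generalizing r with
  | zero => simp
  | succ k ih =>
    have : deriv (fun x => r.eval x) = fun x => (derivative r).eval x := by
      ext x; exact r.deriv
    rw [iteratedDeriv_succ', this, ih, Function.iterate_succ_apply]

lemma iterate_derivative_prod_X_sub_C_self {k : ℕ} (μ : Fin k → ℝ) :
    derivative^[k] (∏ j, (X - C (μ j))) = C (k.factorial : ℝ) := by
  have hmon : (∏ j, (X - C (μ j)) : ℝ[X]).Monic := monic_prod_X_sub_C μ Finset.univ
  have hdeg : (∏ j, (X - C (μ j)) : ℝ[X]).degree = k := by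
    rw [degree_eq_natDegree hmon.ne_zero]; simp
  have hlt : (∏ j, (X - C (μ j)) - X ^ k : ℝ[X]).degree < (k : ℕ) := by
    rw [← hdeg]
    exact degree_sub_lt_left (by rw [hdeg, degree_X_pow]) hmon.ne_zero
      (by rw [hmon.leadingCoeff, (monic_X_pow k).leadingCoeff])
  have h := iterate_derivative_eq_zero_of_degree_lt hlt
  rw [iterate_derivative_sub, sub_eq_zero] at h
  rw [h, iterate_derivative_X_pow_eq_C_mul]
  simp [Nat.descFactorial_self]

/-- Cauchy form of the remainder in polynomial interpolation. -/
lemma exists_interpolation_error_eq {α β : ℝ} {k : ℕ}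
    (μ : Fin k → ℝ) (hμinj : Function.Injective μ) (hμmem : ∀ i, μ i ∈ Set.Icc α β)
    (hk : 0 < k)
    (f : ℝ → ℝ) (hf : ContDiffOn ℝ k f (Set.Icc α β))
    (p : Polynomial ℝ) (hpdeg : p.degree < (k : ℕ))
    (hinterp : ∀ i, p.eval (μ i) = f (μ i)) (t : ℝ) (ht : t ∈ Set.Icc α β) :
    ∃ ξ ∈ Set.Icc α β, f t - p.eval t = (∏ j, (X - C (μ j))).eval t *
      (iteratedDerivWithin k f (Set.Icc α β) ξ / (k.factorial : ℝ)) := by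
  set q : Polynomial ℝ := ∏ j, (X - C (μ j)) with hq
  have hqμ : ∀ i, q.eval (μ i) = 0 := fun i => by
    rw [hq, eval_prod]
    exact Finset.prod_eq_zero (Finset.mem_univ i) (by simp)
  by_cases hnode : ∃ i, μ i = t
  · obtain ⟨i, rfl⟩ := hnode
    exact ⟨μ i, hμmem i, by rw [hqμ, hinterp]; simp⟩
  -- A non-node and a node are two distinct points of the interval, so it is nondegenerate.
  have hαβ : α < β := by
    by_contra hcon
    apply hnode
    have h1 := hμmem ⟨0, hk⟩
    exact ⟨⟨0, hk⟩, by linarith [h1.1, h1.2, ht.1, ht.2]⟩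
  have hud := uniqueDiffOn_Icc hαβ
  have hqt : q.eval t ≠ 0 := by
    rw [hq, eval_prod, Finset.prod_ne_zero_iff]
    intro i _
    simpa [sub_eq_zero] using fun h => hnode ⟨i, h.symm⟩
  set e := f t - p.eval t with he
  set r : Polynomial ℝ := C (q.eval t) * p + C e * q with hr
  set g : ℝ → ℝ := (fun x => q.eval t * f x) - fun x => r.eval x with hgdef
  have hrc : ContDiff ℝ k (fun x => r.eval x) := by
    simpa using r.contDiff_aeval (𝕜 := ℝ) k
  have hfc : ContDiffOn ℝ k (fun x => q.eval t * f x) (Set.Icc α β) := contDiffOn_const.mul hf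
  have hg : ContDiffOn ℝ k g (Set.Icc α β) := hfc.sub hrc.contDiffOn
  set S : Finset ℝ := insert t (Finset.univ.image μ) with hS
  have hcard : S.card = k + 1 := by
    rw [hS, Finset.card_insert_of_notMem (by simpa using hnode),
      Finset.card_image_of_injective _ hμinj]
    simp
  have hSprop : ∀ x ∈ S, x ∈ Set.Icc α β ∧ g x = 0 := by
    intro x hx
    rw [hS, Finset.mem_insert, Finset.mem_image] at hx
    rcases hx with rfl | ⟨i, _, rfl⟩
    · refine ⟨ht, ?_⟩
      simp only [hgdef, hr, Pi.sub_apply, eval_add, eval_mul, eval_C, he]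
      ring
    · refine ⟨hμmem i, ?_⟩
      simp only [hgdef, hr, Pi.sub_apply, eval_add, eval_mul, eval_C, hqμ, hinterp]
      ring
  obtain ⟨ξ, hξ, h0⟩ := exists_iteratedDerivWithin_eq_zero hαβ k g hg
    (S.orderEmbOfFin hcard) (S.orderEmbOfFin hcard).strictMono
    (fun i => (hSprop _ (S.orderEmbOfFin_mem hcard i)).1)
    (fun i => (hSprop _ (S.orderEmbOfFin_mem hcard i)).2)
  refine ⟨ξ, hξ, ?_⟩
  have hder : derivative^[k] r = C (e * (k.factorial : ℝ)) := by
    rw [hr, iterate_map_add, iterate_derivative_C_mul, iterate_derivative_C_mul,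
      iterate_derivative_eq_zero_of_degree_lt hpdeg, hq, iterate_derivative_prod_X_sub_C_self]
    simp
  rw [hgdef, iteratedDerivWithin_sub hξ hud (hfc ξ hξ) hrc.contDiffAt.contDiffWithinAt,
    iteratedDerivWithin_const_mul hξ hud _ (hf ξ hξ),
    iteratedDerivWithin_eq_iteratedDeriv hud hrc.contDiffAt hξ,
    iteratedDeriv_polynomial_eval, hder] at h0
  simp only [eval_C] at h0
  have hfac : (k.factorial : ℝ) ≠ 0 := by positivity
  field_simp
  linarith

lemma e2norm_unitary_mulVec {n : ℕ} (U : Matrix (Fin n) (Fin n) ℂ) (hU : star U * U = 1)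
    (v : Fin n → ℂ) : e2norm (U *ᵥ v) = e2norm v := by
  have key : ∀ x : Fin n → ℂ, ((∑ i, ‖x i‖ ^ 2 : ℝ) : ℂ) = star x ⬝ᵥ x := by
    intro x
    simp [dotProduct, Complex.conj_mul']
  unfold e2norm
  congr 1
  apply Complex.ofReal_injective
  rw [key, key, star_mulVec, dotProduct_mulVec, vecMul_vecMul, ← star_eq_conjTranspose, hU,
    vecMul_one]

/-- Parseval identity in an orthonormal eigenbasis of `Q`. -/
lemma e2norm_cfc_mulVec {n : ℕ} (Q : Matrix (Fin n) (Fin n) ℂ) (hQ : Q.IsHermitian)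
    (b : Fin n → ℂ) (g : ℝ → ℝ) :
    e2norm (hQ.cfc g *ᵥ b) = Real.sqrt (∑ i, |g (hQ.eigenvalues i)| ^ 2 *
      ‖((star (hQ.eigenvectorUnitary : Matrix (Fin n) (Fin n) ℂ)) *ᵥ b) i‖ ^ 2) := by
  rw [IsHermitian.cfc, Unitary.conjStarAlgAut_apply, ← mulVec_mulVec, ← mulVec_mulVec,
    e2norm_unitary_mulVec _ (by simp)]
  simp [e2norm, mulVec_diagonal, mul_pow]

lemma cfc_sub_eq {n : ℕ} (Q : Matrix (Fin n) (Fin n) ℂ) (hQ : Q.IsHermitian) (g h : ℝ → ℝ) :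
    hQ.cfc g - hQ.cfc h = hQ.cfc fun t => g t - h t := by
  rw [IsHermitian.cfc, IsHermitian.cfc, IsHermitian.cfc, ← map_sub, diagonal_sub]
  congr 2
  ext i
  simp

/-- Interpolation error bound for a matrix function: if `Q` is Hermitian with
eigenvalues in `[α, β]`, `p ∈ Π_{k-1}` interpolates a `C^k` function `f` at `k` distinct points
`μ₁, …, μ_k ∈ [α, β]` and `q(t) = ∏ⱼ (t - μⱼ)`, then
`‖q(Q)b‖ · inf |f⁽ᵏ⁾/k!| ≤ ‖f(Q)b − p(Q)b‖ ≤ ‖q(Q)b‖ · sup |f⁽ᵏ⁾/k!|`,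
inf and sup taken over `[α, β]`. -/
theorem interpolation_error_bound {n : ℕ}
    (Q : Matrix (Fin n) (Fin n) ℂ) (hQ : Q.IsHermitian)
    (α β : ℝ) (hαβ : α ≤ β)
    (hspec : ∀ i, hQ.eigenvalues i ∈ Set.Icc α β)
    (b : Fin n → ℂ) (k : ℕ) (hk : 0 < k)
    (μ : Fin k → ℝ) (hμinj : Function.Injective μ) (hμmem : ∀ i, μ i ∈ Set.Icc α β)
    (f : ℝ → ℝ) (hf : ContDiffOn ℝ k f (Set.Icc α β))
    (p : Polynomial ℝ) (hpdeg : p.degree < (k : ℕ))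
    (hinterp : ∀ i, p.eval (μ i) = f (μ i))
    (q : Polynomial ℝ) (hq : q = ∏ j, (X - C (μ j))) :
    e2norm ((hQ.cfc fun t => q.eval t) *ᵥ b) *
        sInf ((fun t : ℝ => |iteratedDerivWithin k f (Set.Icc α β) t / (k.factorial : ℝ)|) ''
          Set.Icc α β) ≤
      e2norm ((hQ.cfc f - hQ.cfc fun t => p.eval t) *ᵥ b) ∧
    e2norm ((hQ.cfc f - hQ.cfc fun t => p.eval t) *ᵥ b) ≤
      e2norm ((hQ.cfc fun t => q.eval t) *ᵥ b) *
        sSup ((fun t : ℝ => |iteratedDerivWithin k f (Set.Icc α β) t / (k.factorial : ℝ)|) ''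
          Set.Icc α β) := by
  set D : ℝ → ℝ := fun t => |iteratedDerivWithin k f (Set.Icc α β) t / (k.factorial : ℝ)| with hD
  have hbb : BddBelow (D '' Set.Icc α β) := by
    refine ⟨0, ?_⟩
    rintro _ ⟨t, _, rfl⟩
    exact abs_nonneg _
  have hba : BddAbove (D '' Set.Icc α β) := by
    rcases hαβ.eq_or_lt with h | h
    · rw [← h, Set.Icc_self]
      exact ((Set.finite_singleton α).image D).bddAbove
    · refine (isCompact_Icc.image_of_continuousOn ?_).bddAbove
      exact ((hf.continuousOn_iteratedDerivWithin le_rfl (uniqueDiffOn_Icc h)).div_const _).abs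
  have h0 : 0 ≤ sInf (D '' Set.Icc α β) := by
    apply Real.sInf_nonneg
    rintro _ ⟨t, _, rfl⟩
    exact abs_nonneg _
  have h1 : 0 ≤ sSup (D '' Set.Icc α β) := by
    apply Real.sSup_nonneg
    rintro _ ⟨t, _, rfl⟩
    exact abs_nonneg _
  have hpt : ∀ i,
      |q.eval (hQ.eigenvalues i)| * sInf (D '' Set.Icc α β) ≤
        |f (hQ.eigenvalues i) - p.eval (hQ.eigenvalues i)| ∧
      |f (hQ.eigenvalues i) - p.eval (hQ.eigenvalues i)| ≤
        |q.eval (hQ.eigenvalues i)| * sSup (D '' Set.Icc α β) := by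
    intro i
    obtain ⟨ξ, hξ, h⟩ := exists_interpolation_error_eq μ hμinj hμmem hk f hf p hpdeg hinterp
      _ (hspec i)
    rw [h, ← hq, abs_mul]
    exact ⟨mul_le_mul_of_nonneg_left (csInf_le hbb ⟨ξ, hξ, rfl⟩) (abs_nonneg _),
      mul_le_mul_of_nonneg_left (le_csSup hba ⟨ξ, hξ, rfl⟩) (abs_nonneg _)⟩
  rw [cfc_sub_eq, e2norm_cfc_mulVec, e2norm_cfc_mulVec]
  constructor
  · rw [← Real.sqrt_sq h0, ← Real.sqrt_mul' _ (sq_nonneg _), Finset.sum_mul]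
    refine Real.sqrt_le_sqrt (Finset.sum_le_sum fun i _ => ?_)
    rw [mul_right_comm, ← mul_pow]
    gcongr
    exact (hpt i).1
  · rw [← Real.sqrt_sq h1, ← Real.sqrt_mul' _ (sq_nonneg _), Finset.sum_mul]
    refine Real.sqrt_le_sqrt (Finset.sum_le_sum fun i _ => ?_)
    rw [mul_right_comm, ← mul_pow |q.eval (hQ.eigenvalues i)|]
    gcongr
    exact (hpt i).2
end

section
/- Let A be an n×n complex matrix, b ∈ ℂⁿ with b ≠ 0, V an n×k complex matrix, T a k×k tridiagonal complex matrix (T_{ij} = 0 whenever |i−j| > 1), β a scalar and w ∈ ℂⁿ, such that the Lanczos relation A V = V T + β w e_kᵀ holds and the first column of V equals b/‖b‖₂ (i.e. V e₁ = b/‖b‖₂). Then for every polynomial p of degree ≤ k−1 and every vector z ∈ ℂᵏ one has V p(T + z e_kᵀ) e₁ ‖b‖₂ = p(A) b. -/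
/-!
Write `M = T + z e_kᵀ`. Both `M u = T u + u_k z` and `A V u = V T u + β u_k w` lose their rank-one
term as soon as the last coordinate `u_k` vanishes, so `V M u = A V u` for such `u`. Since `T` has
no entries below its first subdiagonal, `M ^ m e₁` is supported on the first `m + 1` coordinates,
and its last coordinate is zero for `m < k - 1`. Induction on `m` therefore gives
`V M ^ m e₁ = A ^ m V e₁` for all `m ≤ k - 1` (`lanczos_pow`), and the theorem is the
linear combination of these identities with the coefficients of `p`.
-/

open Matrix Polynomial

lemma e2norm_ne_zero {n : ℕ} {b : Fin n → ℂ} (hb : b ≠ 0) : e2norm b ≠ 0 := by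
  obtain ⟨i, hi⟩ := Function.ne_iff.mp hb
  refine (Real.sqrt_pos.mpr ?_).ne'
  exact Finset.sum_pos' (fun j _ => by positivity)
    ⟨i, Finset.mem_univ i, pow_pos (norm_pos_iff.mpr hi) 2⟩

/-- The Krylov vectors `M ^ m e₁` of `M = T + z e_kᵀ`, for `m < k`, vanish beyond coordinate `m`
(counting from `0`) and are mapped by `V` to `A ^ m V e₁`. The support statement is what drives
the induction: it makes the last coordinate zero at each step that is taken. -/
lemma lanczos_pow {n k : ℕ} (hk : 0 < k)
    (A : Matrix (Fin n) (Fin n) ℂ) (V : Matrix (Fin n) (Fin k) ℂ) (T : Matrix (Fin k) (Fin k) ℂ)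
    (hT : ∀ i j : Fin k, (j : ℕ) + 1 < i → T i j = 0)
    (β : ℂ) (w : Fin n → ℂ)
    (hrel : A * V = V * T +
      β • vecMulVec w (Pi.single (⟨k - 1, Nat.sub_lt hk one_pos⟩ : Fin k) 1))
    (z : Fin k → ℂ) (m : ℕ) (hm : m < k) :
    (∀ i : Fin k, m < i →
      ((T + vecMulVec z (Pi.single (⟨k - 1, Nat.sub_lt hk one_pos⟩ : Fin k) 1)) ^ m *ᵥ
        Pi.single (⟨0, hk⟩ : Fin k) 1) i = 0) ∧
    V *ᵥ ((T + vecMulVec z (Pi.single (⟨k - 1, Nat.sub_lt hk one_pos⟩ : Fin k) 1)) ^ m *ᵥ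
        Pi.single (⟨0, hk⟩ : Fin k) 1) =
      A ^ m *ᵥ (V *ᵥ Pi.single (⟨0, hk⟩ : Fin k) 1) := by
  induction m with
  | zero =>
    refine ⟨fun i hi => ?_, by rw [pow_zero, pow_zero, one_mulVec, one_mulVec]⟩
    have : i ≠ ⟨0, hk⟩ := fun h => by simp [h] at hi
    rw [pow_zero, one_mulVec, Pi.single_eq_of_ne this]
  | succ m ih =>
    obtain ⟨hsupp, hV⟩ := ih (by omega)
    rw [pow_succ', pow_succ', ← mulVec_mulVec, ← mulVec_mulVec, ← hV]
    generalize (T + vecMulVec z (Pi.single (⟨k - 1, Nat.sub_lt hk one_pos⟩ : Fin k) 1)) ^ m *ᵥ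
        Pi.single (⟨0, hk⟩ : Fin k) 1 = u at hsupp
    have hlast : u ⟨k - 1, Nat.sub_lt hk one_pos⟩ = 0 :=
      hsupp _ (show m < k - 1 by omega)
    have hzero : ∀ {l : ℕ} (y : Fin l → ℂ),
        vecMulVec y (Pi.single (⟨k - 1, Nat.sub_lt hk one_pos⟩ : Fin k) 1) *ᵥ u = 0 := by
      intro l y
      rw [vecMulVec_mulVec, single_dotProduct, hlast]
      simp
    rw [add_mulVec, hzero, add_zero]
    refine ⟨fun i hi => ?_, ?_⟩
    · rw [mulVec, dotProduct]
      refine Finset.sum_eq_zero fun j _ => ?_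
      by_cases hj : m < j
      · rw [hsupp j hj, mul_zero]
      · rw [hT i j (by omega), zero_mul]
    · rw [mulVec_mulVec, mulVec_mulVec, hrel, add_mulVec, smul_mulVec, hzero, smul_zero, add_zero]

/-- Polynomial exactness of the (rank-one modified) Lanczos reduction:
if `A V = V T + β w e_kᵀ` with `T` tridiagonal and `V e₁ = b / ‖b‖₂`, then for every
polynomial `p` of degree `≤ k - 1` and every `z ∈ ℂᵏ`,
`V p(T + z e_kᵀ) e₁ ‖b‖₂ = p(A) b`. -/
theorem lanczos_polynomial_exactness {n k : ℕ} (hk : 0 < k)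
    (A : Matrix (Fin n) (Fin n) ℂ) (b : Fin n → ℂ) (hb : b ≠ 0)
    (V : Matrix (Fin n) (Fin k) ℂ) (T : Matrix (Fin k) (Fin k) ℂ)
    (hT : ∀ i j : Fin k, 1 < ((i : ℤ) - (j : ℤ)).natAbs → T i j = 0)
    (β : ℂ) (w : Fin n → ℂ)
    (hrel : A * V = V * T +
      β • vecMulVec w (Pi.single (⟨k - 1, Nat.sub_lt hk one_pos⟩ : Fin k) 1))
    (hV1 : V *ᵥ Pi.single (⟨0, hk⟩ : Fin k) 1 = (e2norm b : ℂ)⁻¹ • b)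
    (p : Polynomial ℂ) (hp : p.degree < (k : ℕ)) (z : Fin k → ℂ) :
    (e2norm b : ℂ) •
        (V *ᵥ ((Polynomial.aeval
            (T + vecMulVec z (Pi.single (⟨k - 1, Nat.sub_lt hk one_pos⟩ : Fin k) 1)) p) *ᵥ
          Pi.single (⟨0, hk⟩ : Fin k) 1)) =
      (Polynomial.aeval A p) *ᵥ b := by
  have hnorm : (e2norm b : ℂ) ≠ 0 := Complex.ofReal_ne_zero.mpr (e2norm_ne_zero hb)
  have hdeg : p.natDegree < k := by
    by_cases h0 : p = 0
    · simpa [h0] using hk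
    · exact (natDegree_lt_iff_degree_lt h0).mpr hp
  have hb' : b = (e2norm b : ℂ) • (V *ᵥ Pi.single (⟨0, hk⟩ : Fin k) 1) := by
    rw [hV1, smul_inv_smul₀ hnorm]
  conv_rhs => rw [hb']
  rw [mulVec_smul, aeval_eq_sum_range' hdeg, aeval_eq_sum_range' hdeg, sum_mulVec, sum_mulVec,
    mulVec_sum]
  congr 1
  refine Finset.sum_congr rfl fun m hm => ?_
  rw [smul_mulVec, smul_mulVec, mulVec_smul,
    (lanczos_pow hk A V T (fun i j hij => hT i j (by omega)) β w hrel z m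
      (Finset.mem_range.mp hm)).2]
end

section
/- Let A be an n×n complex matrix, b ∈ ℂⁿ with b ≠ 0, V an n×k complex matrix, T a k×k tridiagonal complex matrix (T_{ij} = 0 whenever |i−j| > 1), β a scalar and w ∈ ℂⁿ, such that A V = V T + β w e_kᵀ and V e₁ = b/‖b‖₂. Let z ∈ ℂᵏ and suppose T + z e_kᵀ is diagonalizable, T + z e_kᵀ = S D S⁻¹ with D diagonal with distinct diagonal entries λ₁, …, λ_k ∈ ℂ. Let f : ℂ → ℂ be any function, define f(T + z e_kᵀ) := S f(D) S⁻¹ where f(D) is the diagonal matrix with entries f(λᵢ), and let p be the unique polynomial of degree ≤ k−1 with p(λᵢ) = f(λᵢ) for i = 1, …, k. Then V f(T + z e_kᵀ) e₁ ‖b‖₂ = p(A) b. -/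
/-!
With `M = T + z e_kᵀ`, the hypothesis becomes `A V = V M + u e_kᵀ` for `u = β w - V z`. As `M` is
upper Hessenberg (changing the last column of the tridiagonal `T` affects no entry below the
diagonal), `M ^ j e₁` is supported on the first `j + 1` coordinates
(`pow_mulVec_eq_zero_of_hessenberg`). Hence the rank-one term `u e_kᵀ` is not seen by `M ^ j e₁`
for `j < k - 1`, and `A ^ j V e₁ = V M ^ j e₁` for all `j < k` (`pow_mulVec_krylov`). By linearity
`p(A) V e₁ = V p(M) e₁` whenever `deg p < k`, and
`p(M) = S p(D) S⁻¹ = S f(D) S⁻¹` because `p` interpolates `f` on the spectrum of `M`.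
-/

open Matrix Polynomial

/-- Each application of an upper Hessenberg matrix enlarges the support of a vector by at most one
further coordinate. -/
theorem pow_mulVec_eq_zero_of_hessenberg {k : ℕ} (hk : 0 < k) (M : Matrix (Fin k) (Fin k) ℂ)
    (hM : ∀ i j : Fin k, (j : ℕ) + 1 < i → M i j = 0) (j : ℕ) :
    ∀ i : Fin k, j < i → (M ^ j *ᵥ Pi.single (⟨0, hk⟩ : Fin k) 1) i = 0 := by
  induction j with
  | zero =>
    intro i hi
    have hne : i ≠ ⟨0, hk⟩ := by
      rintro rfl
      simp at hi
    simp [hne]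
  | succ j ih =>
    intro i hi
    rw [pow_succ', ← mulVec_mulVec, mulVec, dotProduct]
    refine Finset.sum_eq_zero fun l _ => ?_
    by_cases hl : j < l
    · rw [ih l hl, mul_zero]
    · rw [hM i l (by omega), zero_mul]

theorem pow_mulVec_krylov {n k : ℕ} (hk : 0 < k)
    (A : Matrix (Fin n) (Fin n) ℂ) (V : Matrix (Fin n) (Fin k) ℂ) (M : Matrix (Fin k) (Fin k) ℂ)
    (hM : ∀ i j : Fin k, (j : ℕ) + 1 < i → M i j = 0) (u : Fin n → ℂ)
    (hrel : A * V = V * M +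
      vecMulVec u (Pi.single (⟨k - 1, Nat.sub_lt hk one_pos⟩ : Fin k) 1)) (j : ℕ) (hj : j < k) :
    A ^ j *ᵥ (V *ᵥ Pi.single (⟨0, hk⟩ : Fin k) 1) =
      V *ᵥ (M ^ j *ᵥ Pi.single (⟨0, hk⟩ : Fin k) 1) := by
  induction j with
  | zero => rw [pow_zero, pow_zero, one_mulVec, one_mulVec]
  | succ j ih =>
    have hlast := pow_mulVec_eq_zero_of_hessenberg hk M hM j
      ⟨k - 1, Nat.sub_lt hk one_pos⟩ (by simp only; omega)
    rw [pow_succ', ← mulVec_mulVec, ih (by omega), mulVec_mulVec, hrel, add_mulVec,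
      vecMulVec_mulVec, single_one_dotProduct, hlast, MulOpposite.op_zero, zero_smul,
      add_zero, pow_succ']
    simp only [mulVec_mulVec, Matrix.mul_assoc]

theorem aeval_mulVec_krylov {n k : ℕ} (hk : 0 < k)
    (A : Matrix (Fin n) (Fin n) ℂ) (V : Matrix (Fin n) (Fin k) ℂ) (M : Matrix (Fin k) (Fin k) ℂ)
    (hM : ∀ i j : Fin k, (j : ℕ) + 1 < i → M i j = 0) (u : Fin n → ℂ)
    (hrel : A * V = V * M +
      vecMulVec u (Pi.single (⟨k - 1, Nat.sub_lt hk one_pos⟩ : Fin k) 1))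
    (p : Polynomial ℂ) (hp : p.degree < (k : ℕ)) :
    aeval A p *ᵥ (V *ᵥ Pi.single (⟨0, hk⟩ : Fin k) 1) =
      V *ᵥ (aeval M p *ᵥ Pi.single (⟨0, hk⟩ : Fin k) 1) := by
  have hnat : p.natDegree < k := by
    by_cases h0 : p = 0
    · simpa [h0] using hk
    · exact (natDegree_lt_iff_degree_lt h0).2 hp
  rw [aeval_eq_sum_range' hnat, aeval_eq_sum_range' hnat, sum_mulVec, sum_mulVec, mulVec_sum]
  refine Finset.sum_congr rfl fun j hj => ?_
  rw [smul_mulVec, smul_mulVec, mulVec_smul,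
    pow_mulVec_krylov hk A V M hM u hrel j (Finset.mem_range.1 hj)]

theorem aeval_conj_diagonal {k : ℕ} (S : Matrix (Fin k) (Fin k) ℂ) (hS : IsUnit S.det)
    (d : Fin k → ℂ) (p : Polynomial ℂ) :
    aeval (S * diagonal d * S⁻¹) p = S * diagonal (fun i => p.eval (d i)) * S⁻¹ := by
  have hpow : ∀ j : ℕ, (S * diagonal d * S⁻¹) ^ j = S * diagonal (d ^ j) * S⁻¹ := by
    intro j
    induction j with
    | zero => simp [mul_nonsing_inv S hS]
    | succ j ih =>
      rw [pow_succ, ih]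
      calc S * diagonal (d ^ j) * S⁻¹ * (S * diagonal d * S⁻¹)
          = S * diagonal (d ^ j) * (S⁻¹ * S) * diagonal d * S⁻¹ := by
            simp only [Matrix.mul_assoc]
        _ = S * diagonal (d ^ (j + 1)) * S⁻¹ := by
            rw [nonsing_inv_mul S hS, Matrix.mul_one, Matrix.mul_assoc S, diagonal_mul_diagonal]
            rfl
  induction p using Polynomial.induction_on' with
  | add p q hp hq =>
    rw [map_add, hp, hq, ← Matrix.add_mul, ← Matrix.mul_add, diagonal_add]
    simp
  | monomial j a =>
    have hd : (fun i => (monomial j a).eval (d i)) = a • d ^ j := by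
      ext i
      simp
    rw [aeval_monomial, hpow, hd, diagonal_smul, Matrix.mul_smul, Matrix.smul_mul,
      ← Algebra.smul_def]

/-- If `A V = V T + β w e_kᵀ` with `T` tridiagonal, `V e₁ = b / ‖b‖₂`,
and `T + z e_kᵀ = S D S⁻¹` is diagonalizable with distinct eigenvalues `λ₁, …, λ_k`, then
for any function `f : ℂ → ℂ`, setting `f(T + z e_kᵀ) := S f(D) S⁻¹`, and `p` the
interpolating polynomial of degree `≤ k - 1` with `p(λᵢ) = f(λᵢ)`, one has
`V f(T + z e_kᵀ) e₁ ‖b‖₂ = p(A) b`. -/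
theorem lanczos_function_exactness {n k : ℕ} (hk : 0 < k)
    (A : Matrix (Fin n) (Fin n) ℂ) (b : Fin n → ℂ) (hb : b ≠ 0)
    (V : Matrix (Fin n) (Fin k) ℂ) (T : Matrix (Fin k) (Fin k) ℂ)
    (hT : ∀ i j : Fin k, 1 < ((i : ℤ) - (j : ℤ)).natAbs → T i j = 0)
    (β : ℂ) (w : Fin n → ℂ)
    (hrel : A * V = V * T +
      β • vecMulVec w (Pi.single (⟨k - 1, Nat.sub_lt hk one_pos⟩ : Fin k) 1))
    (hV1 : V *ᵥ Pi.single (⟨0, hk⟩ : Fin k) 1 = (e2norm b : ℂ)⁻¹ • b)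
    (z : Fin k → ℂ)
    (S : Matrix (Fin k) (Fin k) ℂ) (hS : IsUnit S.det)
    (lam : Fin k → ℂ) (hlam : Function.Injective lam)
    (hdiag : T + vecMulVec z (Pi.single (⟨k - 1, Nat.sub_lt hk one_pos⟩ : Fin k) 1) =
      S * Matrix.diagonal lam * S⁻¹)
    (f : ℂ → ℂ)
    (p : Polynomial ℂ) (hp : p.degree < (k : ℕ))
    (hinterp : ∀ i, p.eval (lam i) = f (lam i)) :
    (e2norm b : ℂ) •
        (V *ᵥ ((S * Matrix.diagonal (f ∘ lam) * S⁻¹) *ᵥ Pi.single (⟨0, hk⟩ : Fin k) 1)) =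
      (Polynomial.aeval A p) *ᵥ b := by
  have hM : ∀ i j : Fin k, (j : ℕ) + 1 < i → (S * diagonal lam * S⁻¹) i j = 0 := by
    intro i j hij
    have hi := i.isLt
    have hne : j ≠ ⟨k - 1, Nat.sub_lt hk one_pos⟩ := by
      intro h
      have := congrArg Fin.val h
      simp only at this
      omega
    rw [← hdiag, Matrix.add_apply, hT i j (by omega), vecMulVec_apply,
      Pi.single_eq_of_ne hne]
    simp
  have hrel' : A * V = V * (S * diagonal lam * S⁻¹) +
      vecMulVec (β • w - V *ᵥ z) (Pi.single (⟨k - 1, Nat.sub_lt hk one_pos⟩ : Fin k) 1) := by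
    rw [hrel, ← hdiag, Matrix.mul_add, mul_vecMulVec, sub_vecMulVec, smul_vecMulVec]
    abel
  have hnorm : (e2norm b : ℂ) ≠ 0 := by
    rw [Complex.ofReal_ne_zero, e2norm]
    obtain ⟨i, hi⟩ := Function.ne_iff.1 hb
    have hpos : 0 < ∑ i, ‖b i‖ ^ 2 :=
      Finset.sum_pos' (fun _ _ => by positivity)
        ⟨i, Finset.mem_univ i, pow_pos (norm_pos_iff.2 hi) 2⟩
    exact (Real.sqrt_pos.2 hpos).ne'
  have hf : f ∘ lam = fun i => p.eval (lam i) := funext fun i => (hinterp i).symm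
  rw [hf, ← aeval_conj_diagonal S hS lam p, ← aeval_mulVec_krylov hk A V _ hM _ hrel' p hp, hV1,
    mulVec_smul, smul_smul, mul_inv_cancel₀ hnorm, one_smul]
end

section
/- Let A be an n×n Hermitian complex matrix, b ∈ ℂⁿ, and let T be a k×k Hermitian complex matrix with (real) eigenvalues θ₁, …, θ_k (with multiplicity). For τ ∈ ℝ define the characteristic polynomials π(t) = det(tI − T) and π_τ(t) = det(tI − (T + τI)), and assume π(0) ≠ 0 and π_τ(0) ≠ 0 (i.e. θⱼ ≠ 0 and θⱼ + τ ≠ 0 for all j). Define the (CG residual) vectors r = π(A)b / π(0) and r^τ = π_τ(A + τI)b / π_τ(0). Then r^τ = φ^τ · r, where φ^τ = ∏_{j=1}^{k} θⱼ/(θⱼ + τ). -/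
open Matrix Polynomial

/-! Shifting `T` by `τI` translates its characteristic polynomial, `π_τ(t) = π(t - τ)`, so
`π_τ(A + τI) = π(A)` and the two residuals differ only by the scalar `π(0) / π(-τ)`. Writing
`π(t) = ∏ⱼ (t - θⱼ)`, this scalar is `∏ⱼ (-θⱼ) / ∏ⱼ (-τ - θⱼ) = ∏ⱼ θⱼ / (θⱼ + τ)`. -/

/-- Relation between the CG residuals of the system `Ax = b` and of the
shifted system `(A + τI)x = b`: with `π(t) = det(tI - T)`, `π_τ(t) = det(tI - (T + τI))`
(the characteristic polynomials), `r = π(A)b / π(0)`, and `r^τ = π_τ(A + τI)b / π_τ(0)`,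
one has `r^τ = (∏ⱼ θⱼ/(θⱼ + τ)) · r`, where `θ₁, …, θ_k` are the eigenvalues of the
Hermitian matrix `T`. -/
theorem shifted_cg_residual_relation {n k : ℕ}
    (A : Matrix (Fin n) (Fin n) ℂ) (hA : A.IsHermitian) (b : Fin n → ℂ)
    (T : Matrix (Fin k) (Fin k) ℂ) (hT : T.IsHermitian) (τ : ℝ)
    (h0 : ∀ j, hT.eigenvalues j ≠ 0) (hτ0 : ∀ j, hT.eigenvalues j + τ ≠ 0)
    (r rτ : Fin n → ℂ)
    (hr : r = ((T.charpoly.eval 0)⁻¹ : ℂ) • ((Polynomial.aeval A T.charpoly) *ᵥ b))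
    (hrτ : rτ = (((T + (τ : ℂ) • 1).charpoly.eval 0)⁻¹ : ℂ) •
      ((Polynomial.aeval (A + (τ : ℂ) • 1) (T + (τ : ℂ) • 1).charpoly) *ᵥ b)) :
    rτ = ((∏ j, hT.eigenvalues j / (hT.eigenvalues j + τ) : ℝ) : ℂ) • r := by
  have hshift : (T + (τ : ℂ) • 1).charpoly = T.charpoly.comp (X - C (τ : ℂ)) := by
    have h := Matrix.charpoly_sub_scalar T (-(τ : ℂ))
    rw [map_neg, sub_neg_eq_add, map_neg, ← sub_eq_add_neg] at h
    rw [← h, ← Algebra.algebraMap_eq_smul_one]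
    rfl
  have haeval : aeval (A + (τ : ℂ) • 1) (X - C (τ : ℂ)) = A := by
    simp [Algebra.algebraMap_eq_smul_one]
  have hscalar : (T.charpoly.eval (-(τ : ℂ)))⁻¹ =
      ((∏ j, hT.eigenvalues j / (hT.eigenvalues j + τ) : ℝ) : ℂ) * (T.charpoly.eval 0)⁻¹ := by
    rw [hT.charpoly_eq]
    simp only [eval_prod, eval_sub, eval_X, eval_C, Complex.ofReal_prod, ← Finset.prod_inv_distrib,
      ← Finset.prod_mul_distrib]
    refine Finset.prod_congr rfl fun j _ => ?_
    have h1 : (hT.eigenvalues j : ℂ) ≠ 0 := by exact_mod_cast h0 j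
    have h2 : (hT.eigenvalues j : ℂ) + τ ≠ 0 := by exact_mod_cast hτ0 j
    -- `charpoly_eq` uses the coercion `RCLike.ofReal`; restate the goal with `Complex.ofReal`.
    change (-(τ : ℂ) - (hT.eigenvalues j : ℂ))⁻¹ =
      ((hT.eigenvalues j / (hT.eigenvalues j + τ) : ℝ) : ℂ) * (0 - (hT.eigenvalues j : ℂ))⁻¹
    push_cast
    rw [zero_sub, inv_neg, ← neg_add', inv_neg, add_comm (τ : ℂ)]
    field_simp
  rw [hrτ, hr, hshift, aeval_comp, haeval, eval_comp, smul_smul]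
  simp only [eval_sub, eval_X, eval_C, zero_sub]
  rw [hscalar]
end

section
/- Let Q be an n×n invertible Hermitian complex matrix and b ∈ ℂⁿ, b ≠ 0. Let V̂ be an n×k complex matrix with orthonormal columns (V̂†V̂ = I) whose first column is b/‖b‖₂, let T̂ be a k×k real symmetric tridiagonal matrix with positive subdiagonal entries, let β̂ > 0 and let v̂ ∈ ℂⁿ be a unit vector orthogonal to all columns of V̂, such that the Lanczos relation Q² V̂ = V̂ T̂ + β̂ v̂ e_kᵀ holds (so that the columns of V̂ are the Lanczos basis of the Krylov subspace K_k(Q², b) and T̂ = V̂† Q² V̂ is positive definite). Let r_k = b − Q² V̂ T̂⁻¹ e₁ ‖b‖₂ be the residual after k steps of the conjugate gradient method applied to Q²x = b with zero initial guess. Then ‖sign(Q)b − Q V̂ T̂^{−1/2} e₁ ‖b‖₂‖₂ ≤ ‖r_k‖₂ ≤ 2κ·((κ−1)/(κ+1))^k·‖b‖₂, where κ = ‖Q‖₂·‖Q⁻¹‖₂ is the spectral condition number of Q. -/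
/-!
Both inequalities are checked in an orthonormal eigenbasis of `Q`. For an eigenvector `w` with
eigenvalue `q`, put `a = q²` and `y = w† V`; the Lanczos relation gives
`y (a - T) = β (w† v) e_kᵀ` (`row_mul_apply` exploits this).

*First inequality.* Up to the common factor `-‖b‖ β (w† v)`, the `w`-coordinate of the residual is
the entry `e_kᵀ T⁻¹ e₁`, while that of the error is `sign q` times the entry
`e_kᵀ (√T (|q| + √T))⁻¹ e₁`, because `sign q - q/√t = -sign q (q² - t) / (√t (|q| + √t))`.
So it suffices to compare these two entries. After conjugation by `diag((-1)^i)`, `T` is a symmetric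
M-matrix, hence so is its square root (a limit of polynomials with nonnegative coefficients in
`1 - T/c`), and `(s + √T)⁻¹` is entrywise nonnegative for all `s ≥ 0`
(`checkerboard_resolvent_sqrt`). Products of such matrices are nonnegative too, which applies
to `(√T (s + √T))⁻¹` and to `T⁻¹ - (√T (s + √T))⁻¹ = s T⁻¹ (s + √T)⁻¹`; see `abs_cfc_entry_le_inv`.
No integral representation of the inverse square root is needed.

*Second inequality.* The residual is orthogonal to the range of `V`, which contains the Krylov space
(`krylov_poly`), so it minimizes `‖Q⁻¹ p(Q²) b‖` over polynomials `p` of degree at most `k` with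
`p(0) = 1` (`galerkin_min`). The scaled Chebyshev polynomial (`exists_chebyshev_poly`) bounds the
minimum by `2 ((κ-1)/(κ+1))^k ‖Q⁻¹ b‖`, and passing between `‖·‖` and `‖Q⁻¹ ·‖` costs a factor `κ`.
-/

open Matrix Polynomial

/-- The spectral (operator l2) norm of a complex matrix. -/
noncomputable def specNorm {n : ℕ} (A : Matrix (Fin n) (Fin n) ℂ) : ℝ :=
  ‖Matrix.toEuclideanCLM (𝕜 := ℂ) A‖

/-! ### Functional calculus of a Hermitian matrix -/

theorem herm_cfc_mul {𝕜 : Type*} [RCLike 𝕜] {k : ℕ} {T : Matrix (Fin k) (Fin k) 𝕜}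
    (hT : T.IsHermitian) (f g : ℝ → ℝ) :
    hT.cfc f * hT.cfc g = hT.cfc (fun t => f t * g t) := by
  simp only [Matrix.IsHermitian.cfc, ← map_mul, diagonal_mul_diagonal]
  congr 2
  funext i
  simp

theorem herm_cfc_congr {𝕜 : Type*} [RCLike 𝕜] {k : ℕ} {T : Matrix (Fin k) (Fin k) 𝕜}
    (hT : T.IsHermitian) {f g : ℝ → ℝ} (h : ∀ i, f (hT.eigenvalues i) = g (hT.eigenvalues i)) :
    hT.cfc f = hT.cfc g := by
  simp only [Matrix.IsHermitian.cfc]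
  congr 2
  funext i
  simp [h]

theorem herm_cfc_id {𝕜 : Type*} [RCLike 𝕜] {k : ℕ} {T : Matrix (Fin k) (Fin k) 𝕜}
    (hT : T.IsHermitian) : hT.cfc (fun t => t) = T := by
  conv_rhs => rw [hT.spectral_theorem]
  rfl

theorem herm_cfc_const {k : ℕ} {T : Matrix (Fin k) (Fin k) ℝ}
    (hT : T.IsHermitian) (c : ℝ) : hT.cfc (fun _ => c) = c • 1 := by
  have : (diagonal (RCLike.ofReal ∘ (fun _ => c) ∘ hT.eigenvalues) : Matrix (Fin k) (Fin k) ℝ)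
      = c • 1 := by
    ext i j
    by_cases h : i = j <;> simp [h]
  rw [Matrix.IsHermitian.cfc, this, map_smul, map_one]

theorem herm_cfc_entry {k : ℕ} {T : Matrix (Fin k) (Fin k) ℝ}
    (hT : T.IsHermitian) (f : ℝ → ℝ) (i j : Fin k) :
    hT.cfc f i j = ∑ l, (hT.eigenvectorUnitary : Matrix (Fin k) (Fin k) ℝ) i l *
      f (hT.eigenvalues l) * (hT.eigenvectorUnitary : Matrix (Fin k) (Fin k) ℝ) j l := by
  rw [Matrix.IsHermitian.cfc, Unitary.conjStarAlgAut_apply, Matrix.mul_apply]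
  simp [Matrix.mul_diagonal, Matrix.star_apply]

theorem herm_cfc_add {k : ℕ} {T : Matrix (Fin k) (Fin k) ℝ}
    (hT : T.IsHermitian) (f g : ℝ → ℝ) :
    hT.cfc (fun t => f t + g t) = hT.cfc f + hT.cfc g := by
  ext i j
  simp only [Matrix.add_apply, herm_cfc_entry, ← Finset.sum_add_distrib]
  exact Finset.sum_congr rfl fun l _ => by ring

theorem herm_cfc_smul {k : ℕ} {T : Matrix (Fin k) (Fin k) ℝ}
    (hT : T.IsHermitian) (c : ℝ) (f : ℝ → ℝ) :
    hT.cfc (fun t => c * f t) = c • hT.cfc f := by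
  ext i j
  simp only [Matrix.smul_apply, herm_cfc_entry, smul_eq_mul, Finset.mul_sum]
  exact Finset.sum_congr rfl fun l _ => by ring

theorem herm_cfc_inv {k : ℕ} {T : Matrix (Fin k) (Fin k) ℝ}
    (hT : T.IsHermitian) (h : ∀ i, hT.eigenvalues i ≠ 0) :
    T⁻¹ = hT.cfc (fun t => t⁻¹) := by
  apply Matrix.inv_eq_right_inv
  calc T * hT.cfc (fun t => t⁻¹) = hT.cfc (fun t => t) * hT.cfc (fun t => t⁻¹) := by
        rw [herm_cfc_id]
    _ = 1 := by
      rw [herm_cfc_mul, herm_cfc_congr hT (g := fun _ => 1) fun i => mul_inv_cancel₀ (h i),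
        herm_cfc_const, one_smul]

/-! ### Checkerboard sign patterns and square roots of M-matrices -/

/-- `f(T)` has the checkerboard sign pattern: its `(i,j)` entry has the sign `(-1)^(i+j)`
(or vanishes). Equivalently, `D f(T) D` is entrywise nonnegative for `D = diag((-1)^i)`. -/
def Checkerboard {k : ℕ} {T : Matrix (Fin k) (Fin k) ℝ} (hT : T.IsHermitian) (f : ℝ → ℝ) : Prop :=
  ∀ i j : Fin k, 0 ≤ (-1 : ℝ) ^ ((i : ℕ) + (j : ℕ)) * hT.cfc f i j

namespace Checkerboard

variable {k : ℕ} {T : Matrix (Fin k) (Fin k) ℝ} {hT : T.IsHermitian} {f g : ℝ → ℝ}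

theorem congr (hf : Checkerboard hT f)
    (h : ∀ i, f (hT.eigenvalues i) = g (hT.eigenvalues i)) : Checkerboard hT g := by
  intro i j
  rw [← herm_cfc_congr hT h]
  exact hf i j

theorem add (hf : Checkerboard hT f) (hg : Checkerboard hT g) :
    Checkerboard hT (fun t => f t + g t) := by
  intro i j
  rw [herm_cfc_add, Matrix.add_apply, mul_add]
  exact add_nonneg (hf i j) (hg i j)

theorem smul {c : ℝ} (hc : 0 ≤ c) (hf : Checkerboard hT f) :
    Checkerboard hT (fun t => c * f t) := by
  intro i j
  rw [herm_cfc_smul, Matrix.smul_apply, smul_eq_mul, mul_left_comm]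
  exact mul_nonneg hc (hf i j)

theorem const {c : ℝ} (hc : 0 ≤ c) : Checkerboard hT (fun _ => c) := by
  intro i j
  rw [herm_cfc_const, Matrix.smul_apply, Matrix.one_apply]
  split_ifs with h
  · subst h
    simp [← two_mul, pow_mul, hc]
  · simp

theorem mul (hf : Checkerboard hT f) (hg : Checkerboard hT g) :
    Checkerboard hT (fun t => f t * g t) := by
  intro i j
  rw [← herm_cfc_mul, Matrix.mul_apply, Finset.mul_sum]
  refine Finset.sum_nonneg fun l _ => ?_
  have h : (-1 : ℝ) ^ ((l : ℕ) + l) = 1 := by simp [← two_mul, pow_mul]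
  have := mul_nonneg (hf i l) (hg l j)
  calc (0 : ℝ) ≤ _ := this
    _ = (-1 : ℝ) ^ ((l : ℕ) + l) * ((-1 : ℝ) ^ ((i : ℕ) + j) * (hT.cfc f i l * hT.cfc g l j)) := by
        ring
    _ = _ := by rw [h, one_mul]

theorem pow (hf : Checkerboard hT f) (m : ℕ) : Checkerboard hT (fun t => f t ^ m) := by
  induction m with
  | zero => simpa using const zero_le_one
  | succ m ih => simpa only [pow_succ] using ih.mul hf

theorem lim {F : ℕ → ℝ → ℝ} (hF : ∀ m, Checkerboard hT (F m))
    (h : ∀ i, Filter.Tendsto (fun m => F m (hT.eigenvalues i)) Filter.atTop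
      (nhds (f (hT.eigenvalues i)))) : Checkerboard hT f := by
  intro i j
  refine ge_of_tendsto' (f := fun m => (-1 : ℝ) ^ ((i : ℕ) + j) * hT.cfc (F m) i j)
    (x := Filter.atTop) ?_ fun m => hF m i j
  simp only [herm_cfc_entry]
  refine Filter.Tendsto.const_mul _ (tendsto_finsetSum _ fun l _ => ?_)
  exact ((h l).const_mul _).mul_const _

end Checkerboard

/-- The iteration `x ↦ (ν + x²)/2` started at `0`. For `0 ≤ ν < 1` it increases to the fixed point
`1 - √(1-ν)`, and each iterate is a polynomial in `ν` with nonnegative coefficients. -/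
noncomputable def sqrtIter (ν : ℝ) : ℕ → ℝ
  | 0 => 0
  | m + 1 => (1 / 2) * (ν + sqrtIter ν m ^ 2)

theorem sqrtIter_tendsto {ν : ℝ} (h0 : 0 ≤ ν) (h1 : ν < 1) :
    Filter.Tendsto (sqrtIter ν) Filter.atTop (nhds (1 - Real.sqrt (1 - ν))) := by
  set L := 1 - Real.sqrt (1 - ν) with hL
  have hs : Real.sqrt (1 - ν) ^ 2 = 1 - ν := Real.sq_sqrt (by linarith)
  have hs0 : 0 < Real.sqrt (1 - ν) := Real.sqrt_pos.2 (by linarith)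
  have hs1 : Real.sqrt (1 - ν) ≤ 1 := Real.sqrt_le_one.2 (by linarith)
  have hL0 : 0 ≤ L := by linarith
  have hL1 : L < 1 := by linarith
  have hfix : ν = 2 * L - L ^ 2 := by rw [hL]; nlinarith
  have key : ∀ m, 0 ≤ sqrtIter ν m ∧ sqrtIter ν m ≤ L ∧ L - sqrtIter ν m ≤ L ^ m := by
    intro m
    induction m with
    | zero => simp [sqrtIter, hL0, hL1.le]
    | succ m ih =>
      obtain ⟨a, b, c⟩ := ih
      simp only [sqrtIter]
      refine ⟨by positivity, by nlinarith, ?_⟩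
      calc L - 1 / 2 * (ν + sqrtIter ν m ^ 2)
          = (L + sqrtIter ν m) / 2 * (L - sqrtIter ν m) := by rw [hfix]; ring
        _ ≤ L * (L - sqrtIter ν m) := by
            apply mul_le_mul_of_nonneg_right <;> linarith
        _ ≤ L * L ^ m := mul_le_mul_of_nonneg_left c hL0
        _ = L ^ (m + 1) := by ring
  have hz : Filter.Tendsto (fun m => L - L ^ m) Filter.atTop (nhds L) := by
    simpa using (tendsto_pow_atTop_nhds_zero_of_lt_one hL0 hL1).const_sub L
  exact tendsto_of_tendsto_of_tendsto_of_le_of_le hz tendsto_const_nhds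
    (fun m => by have := (key m).2.2; simp only; linarith) (fun m => (key m).2.1)

/-- For a positive definite `T` whose off-diagonal `(i,j)` entries have sign `-(-1)^(i+j)` (or vanish)
and `s ≥ 0`, `(s + √T)⁻¹` has the checkerboard sign pattern. Up to the signature similarity this
says that the square root of a symmetric M-matrix is an M-matrix: writing `T = c(1 - N)`, the matrix
`1 - √(1 - N)` is a limit of polynomials in `N` with nonnegative coefficients, and the inverse
is a Neumann series in it. -/
theorem checkerboard_resolvent_sqrt {k : ℕ} {T : Matrix (Fin k) (Fin k) ℝ} (hT : T.IsHermitian)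
    (hpos : ∀ i, 0 < hT.eigenvalues i)
    (hoff : ∀ i j : Fin k, i ≠ j → (-1 : ℝ) ^ ((i : ℕ) + (j : ℕ)) * T i j ≤ 0)
    {s : ℝ} (hs : 0 ≤ s) : Checkerboard hT (fun t => (s + Real.sqrt t)⁻¹) := by
  -- a scale exceeding both the eigenvalues and the diagonal entries of `T`
  obtain ⟨c, hc, hcθ, hcd⟩ : ∃ c : ℝ, 0 < c ∧ (∀ i, hT.eigenvalues i ≤ c) ∧ ∀ i, T i i ≤ c := by
    refine ⟨1 + ∑ i, |hT.eigenvalues i| + ∑ i, |T i i|, by positivity, fun i => ?_, fun i => ?_⟩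
    · have := Finset.single_le_sum (f := fun i => |hT.eigenvalues i|)
        (fun i _ => abs_nonneg _) (Finset.mem_univ i)
      have h2 : 0 ≤ ∑ i, |T i i| := by positivity
      have := le_abs_self (hT.eigenvalues i)
      linarith
    · have := Finset.single_le_sum (f := fun i => |T i i|)
        (fun i _ => abs_nonneg _) (Finset.mem_univ i)
      have h2 : 0 ≤ ∑ i, |hT.eigenvalues i| := by positivity
      have := le_abs_self (T i i)
      linarith
  have hN : Checkerboard hT (fun t => 1 + (-c⁻¹) * t) := by
    intro i j
    rw [herm_cfc_add, herm_cfc_smul, herm_cfc_const, herm_cfc_id]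
    simp only [one_smul, Matrix.add_apply, Matrix.one_apply, Matrix.smul_apply, smul_eq_mul]
    split_ifs with h
    · subst h
      have h : (-1 : ℝ) ^ ((i : ℕ) + i) = 1 := by simp [← two_mul, pow_mul]
      rw [h, one_mul]
      have : c⁻¹ * T i i ≤ c⁻¹ * c := mul_le_mul_of_nonneg_left (hcd i) (by positivity)
      rw [inv_mul_cancel₀ hc.ne'] at this
      linarith
    · have := mul_nonneg (inv_nonneg.2 hc.le) (neg_nonneg.2 (hoff i j h))
      linarith
  have hIter : ∀ m, Checkerboard hT (fun t => sqrtIter (1 + (-c⁻¹) * t) m) := by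
    intro m
    induction m with
    | zero => exact Checkerboard.const le_rfl
    | succ m ih => exact (hN.add (ih.pow 2)).smul (by norm_num)
  have hX : Checkerboard hT (fun t => 1 - Real.sqrt (1 - (1 + (-c⁻¹) * t))) := by
    refine Checkerboard.lim hIter fun i => sqrtIter_tendsto ?_ ?_
    · have : c⁻¹ * hT.eigenvalues i ≤ c⁻¹ * c :=
        mul_le_mul_of_nonneg_left (hcθ i) (by positivity)
      rw [inv_mul_cancel₀ hc.ne'] at this
      linarith
    · have := mul_pos (inv_pos.2 hc) (hpos i)
      linarith
  have hX' : Checkerboard hT (fun t => 1 - Real.sqrt t / Real.sqrt c) := by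
    refine hX.congr fun i => ?_
    rw [← Real.sqrt_div (hpos i).le]
    congr 2
    field_simp
    ring
  have hsc : 0 < Real.sqrt c := Real.sqrt_pos.2 hc
  have ha : 0 < s + Real.sqrt c := by positivity
  -- `s + √t = (s + √c) - √c (1 - √t/√c)`, expanded in a Neumann series
  have hY := hX'.smul (c := Real.sqrt c / (s + Real.sqrt c)) (by positivity)
  have hSum : ∀ m, Checkerboard hT (fun t => ∑ l ∈ Finset.range m,
      (Real.sqrt c / (s + Real.sqrt c) * (1 - Real.sqrt t / Real.sqrt c)) ^ l) := by
    intro m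
    induction m with
    | zero => simpa using Checkerboard.const le_rfl
    | succ m ih => simpa only [Finset.sum_range_succ] using ih.add (hY.pow m)
  have hLim : Checkerboard hT (fun t =>
      (1 - (Real.sqrt c / (s + Real.sqrt c) * (1 - Real.sqrt t / Real.sqrt c)))⁻¹) := by
    refine Checkerboard.lim hSum fun i => (hasSum_geometric_of_lt_one ?_ ?_).tendsto_sum_nat
    · have : Real.sqrt (hT.eigenvalues i) / Real.sqrt c ≤ 1 :=
        (div_le_one hsc).2 (Real.sqrt_le_sqrt (hcθ i))
      exact mul_nonneg (by positivity) (by linarith)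
    · have h1 : 0 < Real.sqrt (hT.eigenvalues i) := Real.sqrt_pos.2 (hpos i)
      have : Real.sqrt c / (s + Real.sqrt c) * (1 - Real.sqrt (hT.eigenvalues i) / Real.sqrt c)
        = (Real.sqrt c - Real.sqrt (hT.eigenvalues i)) / (s + Real.sqrt c) := by
        field_simp
      rw [this, div_lt_one ha]
      linarith
  refine (hLim.smul (c := (s + Real.sqrt c)⁻¹) (by positivity)).congr fun i => ?_
  have h1 : 0 < Real.sqrt (hT.eigenvalues i) := Real.sqrt_pos.2 (hpos i)
  have h2 : 1 - (Real.sqrt c / (s + Real.sqrt c) * (1 - Real.sqrt (hT.eigenvalues i) / Real.sqrt c))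
      = (s + Real.sqrt (hT.eigenvalues i)) / (s + Real.sqrt c) := by
    field_simp
    ring
  rw [h2]
  field_simp

/-- The comparison behind the first inequality: `(√T (s + √T))⁻¹` is dominated entrywise by `T⁻¹`,
because both it and the difference `T⁻¹ - (√T (s + √T))⁻¹ = s T⁻¹ (s + √T)⁻¹` have the
checkerboard sign pattern. -/
theorem abs_cfc_entry_le_inv {k : ℕ} {T : Matrix (Fin k) (Fin k) ℝ} (hT : T.IsHermitian)
    (hpos : ∀ i, 0 < hT.eigenvalues i)
    (hoff : ∀ i j : Fin k, i ≠ j → (-1 : ℝ) ^ ((i : ℕ) + (j : ℕ)) * T i j ≤ 0)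
    {s : ℝ} (hs : 0 ≤ s) (i j : Fin k) :
    |hT.cfc (fun t => (Real.sqrt t * (s + Real.sqrt t))⁻¹) i j| ≤ |T⁻¹ i j| := by
  have G0 := checkerboard_resolvent_sqrt hT hpos hoff le_rfl
  have Gs := checkerboard_resolvent_sqrt hT hpos hoff hs
  have hA : Checkerboard hT (fun t => (Real.sqrt t * (s + Real.sqrt t))⁻¹) :=
    (G0.mul Gs).congr fun i => by simp [mul_comm]
  have hD : Checkerboard hT
      (fun t => t⁻¹ + (-1) * (Real.sqrt t * (s + Real.sqrt t))⁻¹) := by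
    refine (((G0.mul G0).mul Gs).smul hs).congr fun l => ?_
    have h1 : 0 < Real.sqrt (hT.eigenvalues l) := Real.sqrt_pos.2 (hpos l)
    have h2 : Real.sqrt (hT.eigenvalues l) ^ 2 = hT.eigenvalues l := Real.sq_sqrt (hpos l).le
    have h3 : (hT.eigenvalues l)⁻¹ = (Real.sqrt (hT.eigenvalues l) ^ 2)⁻¹ := by rw [h2]
    rw [h3]
    field_simp
    ring
  have h1 := hA i j
  have h2 := hD i j
  rw [herm_cfc_add, herm_cfc_smul, ← herm_cfc_inv hT fun l => (hpos l).ne'] at h2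
  simp only [Matrix.add_apply, Matrix.smul_apply, smul_eq_mul] at h2
  have e : ∀ x : ℝ, |x| = |(-1 : ℝ) ^ ((i : ℕ) + (j : ℕ)) * x| := by
    intro x; simp [abs_mul]
  rw [e, e (T⁻¹ i j), abs_of_nonneg h1]
  refine le_trans ?_ (le_abs_self _)
  linarith

/-! ### The Chebyshev polynomial -/

/-- The scaled Chebyshev polynomial `T_k((M²+m²-2x)/(M²-m²)) / T_k((M²+m²)/(M²-m²))`, normalized to
be `1` at `0`, is small on `[m², M²]`: the numerator is at most `1` there, and the denominator
is `(z^k + z^(-k))/2` with `z = (M+m)/(M-m)`. If `m = M`, the polynomial `1 - x/m²` vanishes at the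
single point in question. -/
theorem exists_chebyshev_poly {m M : ℝ} (hm : 0 < m) (hmM : m ≤ M) {k : ℕ} (hk : 0 < k) :
    ∃ p : ℝ[X], p.natDegree ≤ k ∧ p.eval 0 = 1 ∧
      ∀ x, m ^ 2 ≤ x → x ≤ M ^ 2 → |p.eval x| ≤ 2 * ((M / m - 1) / (M / m + 1)) ^ k := by
  rcases hmM.eq_or_lt with rfl | hlt
  · refine ⟨1 - C (m ^ 2)⁻¹ * X, ?_, by simp, fun x h1 h2 => ?_⟩
    · refine (natDegree_sub_le _ _).trans ?_
      simp only [natDegree_one, zero_le, sup_of_le_right]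
      exact ((natDegree_C_mul_le _ _).trans natDegree_X_le).trans hk
    · have : x = m ^ 2 := le_antisymm h2 h1
      subst this
      simp [hm.ne', hk.ne']
  · have hM : 0 < M := hm.trans hlt
    have hd : 0 < M ^ 2 - m ^ 2 := by nlinarith
    set z : ℝ := (M + m) / (M - m) with hz
    have hMm : 0 < M - m := by linarith
    have hz1 : 0 < z := by positivity
    have hγ : (M ^ 2 + m ^ 2) / (M ^ 2 - m ^ 2) = Real.cosh (Real.log z) := by
      rw [Real.cosh_log hz1, hz]
      have : M ^ 2 - m ^ 2 = (M - m) * (M + m) := by ring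
      rw [this]
      field_simp
      ring
    set τ := (Chebyshev.T ℝ k).eval ((M ^ 2 + m ^ 2) / (M ^ 2 - m ^ 2)) with hτ
    have hτ1 : z ^ k / 2 ≤ τ := by
      rw [hτ, hγ, Chebyshev.T_real_cosh, Real.cosh_eq]
      have : Real.exp (((k : ℤ) : ℝ) * Real.log z) = z ^ k := by
        rw [Int.cast_natCast, Real.exp_nat_mul, Real.exp_log hz1]
      rw [this]
      have := Real.exp_pos (-(((k : ℤ) : ℝ) * Real.log z))
      linarith
    have hτ0 : 0 < τ := lt_of_lt_of_le (by positivity) hτ1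
    refine ⟨C τ⁻¹ * (Chebyshev.T ℝ k).comp
      (C ((M ^ 2 + m ^ 2) / (M ^ 2 - m ^ 2)) - C (2 / (M ^ 2 - m ^ 2)) * X), ?_, ?_, ?_⟩
    · refine (natDegree_C_mul_le _ _).trans (natDegree_comp_le.trans ?_)
      have h1 : (Chebyshev.T ℝ k).natDegree ≤ k := by
        apply natDegree_le_of_degree_le
        rw [Chebyshev.degree_T]; simp
      have h2 : (C ((M ^ 2 + m ^ 2) / (M ^ 2 - m ^ 2)) - C (2 / (M ^ 2 - m ^ 2)) * X
        : ℝ[X]).natDegree ≤ 1 := by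
        refine (natDegree_sub_le _ _).trans ?_
        simp only [natDegree_C, zero_le, sup_of_le_right]
        exact (natDegree_C_mul_le _ _).trans natDegree_X_le
      calc _ ≤ k * 1 := Nat.mul_le_mul h1 h2
        _ = k := mul_one k
    · simp only [eval_mul, eval_C, eval_comp, eval_sub, eval_X, mul_zero, sub_zero, ← hτ]
      exact inv_mul_cancel₀ hτ0.ne'
    · intro x h1 h2
      simp only [eval_mul, eval_C, eval_comp, eval_sub, eval_X]
      have hx : |(M ^ 2 + m ^ 2) / (M ^ 2 - m ^ 2) - 2 / (M ^ 2 - m ^ 2) * x| ≤ 1 := by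
        have : (M ^ 2 + m ^ 2) / (M ^ 2 - m ^ 2) - 2 / (M ^ 2 - m ^ 2) * x
          = (M ^ 2 + m ^ 2 - 2 * x) / (M ^ 2 - m ^ 2) := by ring
        rw [this, abs_le, le_div_iff₀ hd, div_le_iff₀ hd]
        constructor <;> linarith
      have hT := Chebyshev.abs_eval_T_real_le_one (k : ℤ) hx
      rw [abs_mul, abs_of_pos (inv_pos.2 hτ0)]
      have hzz : (M / m - 1) / (M / m + 1) = z⁻¹ := by
        rw [hz]; field_simp
      rw [hzz]
      calc _ ≤ τ⁻¹ * 1 := mul_le_mul_of_nonneg_left hT (inv_nonneg.2 hτ0.le)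
        _ = τ⁻¹ := mul_one _
        _ ≤ (z ^ k / 2)⁻¹ := inv_anti₀ (by positivity) hτ1
        _ = _ := by rw [inv_div, inv_pow]; rfl

/-! ### Norms, spectral bounds and the Krylov space -/

theorem e2norm_nonneg {n : ℕ} (x : Fin n → ℂ) : 0 ≤ e2norm x := Real.sqrt_nonneg _

theorem e2norm_pos {n : ℕ} {x : Fin n → ℂ} (hx : x ≠ 0) : 0 < e2norm x := by
  obtain ⟨i, hi⟩ := Function.ne_iff.1 hx
  refine Real.sqrt_pos.2 (Finset.sum_pos' (fun _ _ => by positivity) ⟨i, Finset.mem_univ i, ?_⟩)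
  have : 0 < ‖x i‖ := norm_pos_iff.2 hi
  positivity

theorem e2norm_eq_norm {n : ℕ} (x : Fin n → ℂ) : e2norm x = ‖WithLp.toLp 2 x‖ := by
  rw [EuclideanSpace.norm_eq]; rfl

theorem star_dotProduct_self {n : ℕ} (x : Fin n → ℂ) :
    star x ⬝ᵥ x = ((e2norm x ^ 2 : ℝ) : ℂ) := by
  rw [e2norm_sq]
  push_cast
  refine Finset.sum_congr rfl fun i _ => ?_
  rw [← Complex.conj_mul']
  rfl

theorem star_mulVec_dotProduct {m n : ℕ} (A : Matrix (Fin m) (Fin n) ℂ) (x y) :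
    star (A *ᵥ x) ⬝ᵥ y = star x ⬝ᵥ (Aᴴ *ᵥ y) := by
  rw [Matrix.star_mulVec, Matrix.dotProduct_mulVec]

theorem e2norm_isometry {m n : ℕ} {W : Matrix (Fin m) (Fin n) ℂ} (hW : Wᴴ * W = 1)
    (x : Fin n → ℂ) : e2norm (W *ᵥ x) = e2norm x := by
  have h : star (W *ᵥ x) ⬝ᵥ (W *ᵥ x) = star x ⬝ᵥ x := by
    rw [star_mulVec_dotProduct, Matrix.mulVec_mulVec, hW, Matrix.one_mulVec]
  rw [star_dotProduct_self, star_dotProduct_self, Complex.ofReal_inj] at h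
  exact (sq_eq_sq₀ (e2norm_nonneg _) (e2norm_nonneg _)).1 h

theorem e2norm_mulVec_le {n : ℕ} (A : Matrix (Fin n) (Fin n) ℂ) (x : Fin n → ℂ) :
    e2norm (A *ᵥ x) ≤ specNorm A * e2norm x := by
  rw [e2norm_eq_norm, e2norm_eq_norm, ← Matrix.toEuclideanCLM_toLp]
  exact ContinuousLinearMap.le_opNorm _ _

theorem e2norm_smul {n : ℕ} (c : ℂ) (x : Fin n → ℂ) : e2norm (c • x) = ‖c‖ * e2norm x := by
  rw [e2norm_eq_norm, e2norm_eq_norm, WithLp.toLp_smul, norm_smul]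

/-- If an invertible `Q` maps a nonzero `x` to `q x`, then `|q|` lies between `1/‖Q⁻¹‖` and `‖Q‖`. -/
theorem abs_eigenvalue_bounds {n : ℕ} {Q : Matrix (Fin n) (Fin n) ℂ} (hQ : IsUnit Q.det)
    {x : Fin n → ℂ} (hx : x ≠ 0) {q : ℝ} (h : Q *ᵥ x = (q : ℂ) • x) :
    |q| ≤ specNorm Q ∧ 1 ≤ specNorm Q⁻¹ * |q| := by
  have hp := e2norm_pos hx
  constructor
  · have := e2norm_mulVec_le Q x
    rw [h, e2norm_smul, Complex.norm_real, Real.norm_eq_abs] at this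
    exact le_of_mul_le_mul_right this hp
  · have h1 := e2norm_mulVec_le Q⁻¹ (Q *ᵥ x)
    rw [Matrix.mulVec_mulVec, Matrix.nonsing_inv_mul _ hQ, Matrix.one_mulVec, h, e2norm_smul,
      Complex.norm_real, Real.norm_eq_abs, ← mul_assoc] at h1
    exact le_of_mul_le_mul_right (by rwa [one_mul]) hp

/-- `T` is a compression of `Q²`, hence has positive eigenvalues. -/
theorem lanczos_eigenvalues_pos {n k : ℕ} {Q : Matrix (Fin n) (Fin n) ℂ} (hQ : Q.IsHermitian)
    (hQinv : IsUnit Q.det) {V : Matrix (Fin n) (Fin k) ℂ} (hV : Vᴴ * V = 1)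
    {T : Matrix (Fin k) (Fin k) ℝ} (hT : T.IsHermitian)
    (hc : Vᴴ * (Q ^ 2 * V) = T.map (algebraMap ℝ ℂ)) (i : Fin k) : 0 < hT.eigenvalues i := by
  set u : Fin k → ℝ := ⇑(hT.eigenvectorBasis i) with hu
  have hTu : T *ᵥ u = hT.eigenvalues i • u := hT.mulVec_eigenvectorBasis i
  have hu0 : u ≠ 0 := by
    intro h0
    have h1 := (hT.eigenvectorBasis).orthonormal.1 i
    have : hT.eigenvectorBasis i = 0 := by
      ext j
      exact congrFun h0 j
    rw [this] at h1
    simp at h1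
  set z : Fin k → ℂ := fun j => (u j : ℂ) with hz
  have hz0 : z ≠ 0 := by
    intro h0
    apply hu0
    funext j
    have := congrFun h0 j
    simpa [hz] using this
  have hTz : T.map (algebraMap ℝ ℂ) *ᵥ z = (hT.eigenvalues i : ℂ) • z := by
    funext j
    have := congrArg (fun t : ℝ => (t : ℂ)) (congrFun hTu j)
    simpa [Matrix.mulVec, dotProduct, hz] using this
  have hpos : e2norm (Q *ᵥ (V *ᵥ z)) ^ 2 = hT.eigenvalues i * e2norm z ^ 2 := by
    have h : star (Q *ᵥ (V *ᵥ z)) ⬝ᵥ (Q *ᵥ (V *ᵥ z)) = (hT.eigenvalues i : ℂ) * (star z ⬝ᵥ z) := by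
      rw [star_mulVec_dotProduct, star_mulVec_dotProduct, hQ.eq, ← smul_eq_mul,
        ← dotProduct_smul, ← hTz, ← hc]
      simp only [Matrix.mulVec_mulVec, pow_two, Matrix.mul_assoc]
    rw [star_dotProduct_self, star_dotProduct_self] at h
    exact_mod_cast h
  have hne : Q *ᵥ (V *ᵥ z) ≠ 0 := by
    intro h0
    apply hz0
    have h1 : V *ᵥ z = 0 := by
      have := congrArg (fun x => Q⁻¹ *ᵥ x) h0
      simpa [Matrix.mulVec_mulVec, Matrix.nonsing_inv_mul _ hQinv, ← Matrix.mul_assoc] using this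
    have := congrArg (fun x => Vᴴ *ᵥ x) h1
    simpa [Matrix.mulVec_mulVec, hV] using this
  have h1 := e2norm_pos hne
  have h2 := e2norm_pos hz0
  by_contra hcon
  push Not at hcon
  have : hT.eigenvalues i * e2norm z ^ 2 ≤ 0 :=
    mul_nonpos_of_nonpos_of_nonneg hcon (by positivity)
  nlinarith

theorem tridiag_pow_first_col {k : ℕ} (hk : 0 < k) {T : Matrix (Fin k) (Fin k) ℝ}
    (hTtri : ∀ i j : Fin k, 1 < ((i : ℤ) - (j : ℤ)).natAbs → T i j = 0) (j : ℕ) (i : Fin k)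
    (hij : j < i) : (T ^ j) i ⟨0, hk⟩ = 0 := by
  induction j generalizing i with
  | zero =>
    rw [pow_zero, Matrix.one_apply_ne]
    intro h
    rw [h] at hij
    exact lt_irrefl _ hij
  | succ j ih =>
    rw [pow_succ', Matrix.mul_apply]
    refine Finset.sum_eq_zero fun l _ => ?_
    by_cases hl : j < l
    · rw [ih l hl, mul_zero]
    · rw [hTtri i l (by omega), zero_mul]

/-- Exactness of the Lanczos basis on the Krylov space: `A^j V e₁ = V T^j e₁` for `j < k`. -/
theorem krylov_eq {n k : ℕ} (hk : 0 < k) {A : Matrix (Fin n) (Fin n) ℂ}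
    {V : Matrix (Fin n) (Fin k) ℂ} {T : Matrix (Fin k) (Fin k) ℝ}
    (hTtri : ∀ i j : Fin k, 1 < ((i : ℤ) - (j : ℤ)).natAbs → T i j = 0)
    {β : ℂ} {v : Fin n → ℂ}
    (hrel : A * V = V * T.map (algebraMap ℝ ℂ) +
      β • vecMulVec v (Pi.single (⟨k - 1, Nat.sub_lt hk one_pos⟩ : Fin k) 1))
    (j : ℕ) (hj : j < k) :
    A ^ j *ᵥ (V *ᵥ Pi.single (⟨0, hk⟩ : Fin k) 1) =
      V *ᵥ ((T ^ j).map (algebraMap ℝ ℂ) *ᵥ Pi.single (⟨0, hk⟩ : Fin k) 1) := by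
  induction j with
  | zero => rw [pow_zero, pow_zero, Matrix.one_mulVec,
      Matrix.map_one _ (map_zero _) (map_one _), Matrix.one_mulVec]
  | succ j ih =>
    have h0 := tridiag_pow_first_col hk hTtri j ⟨k - 1, Nat.sub_lt hk one_pos⟩
      (by simp only; omega)
    rw [pow_succ', ← Matrix.mulVec_mulVec, ih (by omega), Matrix.mulVec_mulVec, hrel,
      Matrix.add_mulVec, Matrix.smul_mulVec, Matrix.vecMulVec_mulVec, single_dotProduct]
    have h1 : ((T ^ j).map (algebraMap ℝ ℂ) *ᵥ Pi.single (⟨0, hk⟩ : Fin k) 1)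
        ⟨k - 1, Nat.sub_lt hk one_pos⟩ = 0 := by
      simp [h0]
    rw [h1, pow_succ', Matrix.map_mul, ← Matrix.mulVec_mulVec, ← Matrix.mulVec_mulVec]
    simp

/-- Polynomials of degree `< k` in `A`, applied to the starting vector, stay in the range of `V`. -/
theorem krylov_poly {n k : ℕ} (hk : 0 < k) {A : Matrix (Fin n) (Fin n) ℂ}
    {V : Matrix (Fin n) (Fin k) ℂ} {T : Matrix (Fin k) (Fin k) ℝ}
    (hTtri : ∀ i j : Fin k, 1 < ((i : ℤ) - (j : ℤ)).natAbs → T i j = 0)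
    {β : ℂ} {v : Fin n → ℂ}
    (hrel : A * V = V * T.map (algebraMap ℝ ℂ) +
      β • vecMulVec v (Pi.single (⟨k - 1, Nat.sub_lt hk one_pos⟩ : Fin k) 1))
    (c : ℕ → ℂ) :
    ∃ z : Fin k → ℂ, V *ᵥ z =
      ∑ j ∈ Finset.range k, c j • (A ^ j *ᵥ (V *ᵥ Pi.single (⟨0, hk⟩ : Fin k) 1)) := by
  refine ⟨∑ j ∈ Finset.range k,
    c j • ((T ^ j).map (algebraMap ℝ ℂ) *ᵥ Pi.single (⟨0, hk⟩ : Fin k) 1), ?_⟩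
  rw [Matrix.mulVec_sum]
  refine Finset.sum_congr rfl fun j hj => ?_
  rw [krylov_eq hk hTtri hrel j (Finset.mem_range.1 hj), Matrix.mulVec_smul]

/-- For a row vector `y` with `y (a - T) = c e_lᵀ`, the value `y (a - T) H e` is `c` times an entry
of `H`. Applied to eigenvectors of `Q²`, this expresses both the CG residual and the error of the
sign approximation through single entries of functions of `T`. -/
theorem row_mul_apply {k : ℕ} {T X H : Matrix (Fin k) (Fin k) ℝ} {a : ℝ} {y : Fin k → ℂ} {c : ℂ}
    {l i₀ : Fin k}
    (hy : y ᵥ* T.map (algebraMap ℝ ℂ) + c • Pi.single l 1 = (a : ℂ) • y)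
    (hX : X = (a • 1 - T) * H) :
    y ⬝ᵥ (X.map (algebraMap ℝ ℂ) *ᵥ Pi.single i₀ 1) = c * (H l i₀ : ℂ) := by
  have hXc : X.map (algebraMap ℝ ℂ) =
      ((a : ℂ) • 1 - T.map (algebraMap ℝ ℂ)) * H.map (algebraMap ℝ ℂ) := by
    rw [hX, Matrix.map_mul]
    congr 1
    ext i j
    by_cases h : i = j <;> simp [h]
  have hy' : y ᵥ* ((a : ℂ) • 1 - T.map (algebraMap ℝ ℂ)) = c • Pi.single l 1 := by
    rw [Matrix.vecMul_sub, Matrix.vecMul_smul, Matrix.vecMul_one, ← hy]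
    abel
  rw [hXc, Matrix.dotProduct_mulVec, ← Matrix.vecMul_vecMul, hy', Matrix.smul_vecMul,
    smul_dotProduct]
  simp

/-- In the eigenbasis of `Q`, applying `f(Q)` multiplies coordinate `i` by `f` of the `i`-th
eigenvalue. -/
theorem eigen_mul_cfc {n : ℕ} {Q : Matrix (Fin n) (Fin n) ℂ} (hQ : Q.IsHermitian) (f : ℝ → ℝ)
    (x : Fin n → ℂ) (i : Fin n) :
    (star (hQ.eigenvectorUnitary : Matrix (Fin n) (Fin n) ℂ) *ᵥ (hQ.cfc f *ᵥ x)) i =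
      (f (hQ.eigenvalues i) : ℂ) *
        (star (hQ.eigenvectorUnitary : Matrix (Fin n) (Fin n) ℂ) *ᵥ x) i := by
  rw [Matrix.IsHermitian.cfc, Unitary.conjStarAlgAut_apply, Matrix.mulVec_mulVec,
    ← Matrix.mul_assoc, ← Matrix.mul_assoc, Unitary.coe_star_mul_self, Matrix.one_mul,
    ← Matrix.mulVec_mulVec, Matrix.mulVec_diagonal]
  rfl

/-- The Galerkin minimization property in eigencoordinates: if `R` is orthogonal to `D`, then `R`
minimizes the `A⁻¹`-norm over the line `R + A D`, where `A = diag a`. -/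
theorem galerkin_min {n : ℕ} {a p : Fin n → ℝ} (ha : ∀ i, 0 < a i) {R D B : Fin n → ℂ}
    (hp : ∀ i, (p i : ℂ) * B i = R i + (a i : ℂ) * D i) (horth : star D ⬝ᵥ R = 0) :
    ∑ i, ‖R i‖ ^ 2 / a i ≤ ∑ i, p i ^ 2 * ‖B i‖ ^ 2 / a i := by
  have key : ∀ i, p i ^ 2 * ‖B i‖ ^ 2 / a i =
      ‖R i‖ ^ 2 / a i + 2 * (star (D i) * R i).re + a i * ‖D i‖ ^ 2 := by
    intro i
    have h1 : p i ^ 2 * ‖B i‖ ^ 2 = ‖R i + (a i : ℂ) * D i‖ ^ 2 := by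
      rw [← hp, norm_mul, mul_pow, Complex.norm_real, Real.norm_eq_abs, sq_abs]
    have h2 : ‖R i + (a i : ℂ) * D i‖ ^ 2 =
        ‖R i‖ ^ 2 + 2 * a i * (star (D i) * R i).re + a i ^ 2 * ‖D i‖ ^ 2 := by
      simp only [← Complex.normSq_eq_norm_sq, Complex.normSq_apply]
      simp
      ring
    rw [h1, h2]
    have := (ha i).ne'
    field_simp
  have h0 : ∑ i, (star (D i) * R i).re = 0 := by
    rw [← Complex.re_sum]
    have : ∑ i, star (D i) * R i = 0 := horth
    rw [this, Complex.zero_re]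
  rw [Finset.sum_congr rfl fun i _ => key i, Finset.sum_add_distrib, Finset.sum_add_distrib,
    ← Finset.mul_sum, h0, mul_zero, add_zero]
  have : 0 ≤ ∑ i, a i * ‖D i‖ ^ 2 := Finset.sum_nonneg fun i _ => by
    have := ha i
    positivity
  linarith

/-! ### The error bound -/

/-- Error bound for the Lanczos (on `Q²`) approximation of `sign(Q)b`:
with the Lanczos relation `Q² V̂ = V̂ T̂ + β̂ v̂ e_kᵀ` (orthonormal `V̂` with first column
`b/‖b‖₂`, real symmetric tridiagonal `T̂` with positive subdiagonal, `β̂ > 0`, `v̂` a unit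
vector orthogonal to the columns of `V̂`) and `r_k = b − Q² V̂ T̂⁻¹ e₁ ‖b‖₂` the CG residual
for `Q²x = b`, one has
`‖sign(Q)b − Q V̂ T̂^{-1/2} e₁ ‖b‖₂‖ ≤ ‖r_k‖ ≤ 2κ((κ-1)/(κ+1))^k ‖b‖₂`,
where `κ = ‖Q‖₂ ‖Q⁻¹‖₂`. -/
theorem lanczos_sign_error_bound {n k : ℕ} (hk : 0 < k)
    (Q : Matrix (Fin n) (Fin n) ℂ) (hQ : Q.IsHermitian) (hQinv : IsUnit Q.det)
    (b : Fin n → ℂ) (hb : b ≠ 0)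
    (V : Matrix (Fin n) (Fin k) ℂ) (hVorth : Vᴴ * V = 1)
    (hV1 : V *ᵥ Pi.single (⟨0, hk⟩ : Fin k) 1 = (e2norm b : ℂ)⁻¹ • b)
    (T : Matrix (Fin k) (Fin k) ℝ) (hTsym : T.IsHermitian)
    (hTtri : ∀ i j : Fin k, 1 < ((i : ℤ) - (j : ℤ)).natAbs → T i j = 0)
    (hTsub : ∀ (i : ℕ) (h : i + 1 < k), 0 < T ⟨i + 1, h⟩ ⟨i, Nat.lt_of_succ_lt h⟩)
    (βh : ℝ) (hβ : 0 < βh)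
    (v : Fin n → ℂ) (hv : e2norm v = 1) (hvV : star v ᵥ* V = 0)
    (hrel : Q ^ 2 * V = V * T.map (algebraMap ℝ ℂ) +
      (βh : ℂ) • vecMulVec v (Pi.single (⟨k - 1, Nat.sub_lt hk one_pos⟩ : Fin k) 1))
    (r : Fin n → ℂ)
    (hr : r = b - (e2norm b : ℂ) •
      (Q ^ 2 *ᵥ (V *ᵥ ((T⁻¹.map (algebraMap ℝ ℂ)) *ᵥ Pi.single (⟨0, hk⟩ : Fin k) 1))))
    (κ : ℝ) (hκ : κ = specNorm Q * specNorm Q⁻¹) :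
    e2norm ((hQ.cfc Real.sign) *ᵥ b - (e2norm b : ℂ) •
        (Q *ᵥ (V *ᵥ (((hTsym.cfc fun t => (Real.sqrt t)⁻¹).map (algebraMap ℝ ℂ)) *ᵥ
          Pi.single (⟨0, hk⟩ : Fin k) 1)))) ≤ e2norm r ∧
      e2norm r ≤ 2 * κ * ((κ - 1) / (κ + 1)) ^ k * e2norm b := by
  -- `W` diagonalizes `Q`; everything is compared coordinatewise in the eigenbasis.
  set W : Matrix (Fin n) (Fin n) ℂ := star (hQ.eigenvectorUnitary : Matrix (Fin n) (Fin n) ℂ)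
    with hW
  set q := hQ.eigenvalues with hq
  have hWW : Wᴴ * W = 1 := by
    rw [hW, ← Matrix.star_eq_conjTranspose, star_star]
    exact Unitary.coe_mul_star_self _
  have hWQ : ∀ x i, (W *ᵥ (Q *ᵥ x)) i = (q i : ℂ) * (W *ᵥ x) i := by
    intro x i
    have := eigen_mul_cfc hQ (fun t => t) x i
    rwa [herm_cfc_id] at this
  have hWA : ∀ x i, (W *ᵥ (Q ^ 2 *ᵥ x)) i = ((q i ^ 2 : ℝ) : ℂ) * (W *ᵥ x) i := by
    intro x i
    rw [pow_two, ← Matrix.mulVec_mulVec, hWQ, hWQ]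
    push_cast
    ring
  have hvV' : Vᴴ *ᵥ v = 0 := by
    have h := congrArg star hvV
    rwa [Matrix.star_vecMul, star_star, star_zero] at h
  set l : Fin k := ⟨k - 1, Nat.sub_lt hk one_pos⟩ with hl
  set i₀ : Fin k := ⟨0, hk⟩ with hi₀
  have hc : Vᴴ * (Q ^ 2 * V) = T.map (algebraMap ℝ ℂ) := by
    rw [hrel, Matrix.mul_add, ← Matrix.mul_assoc, hVorth, Matrix.one_mul, Matrix.mul_smul,
      Matrix.mul_vecMulVec, hvV']
    simp
  have hpos := lanczos_eigenvalues_pos hQ hQinv hVorth hTsym hc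
  have hoff : ∀ i j : Fin k, i ≠ j → (-1 : ℝ) ^ ((i : ℕ) + (j : ℕ)) * T i j ≤ 0 := by
    have hodd : ∀ m : ℕ, (-1 : ℝ) ^ (m + 1 + m) = -1 := by
      intro m
      rw [show m + 1 + m = 2 * m + 1 by ring, pow_succ, pow_mul]
      norm_num
    have hstep : ∀ i j : Fin k, (i : ℕ) = j + 1 → (-1 : ℝ) ^ ((i : ℕ) + (j : ℕ)) * T i j ≤ 0 := by
      intro i j h
      have hlt : (j : ℕ) + 1 < k := h ▸ i.2
      have hi : i = ⟨j + 1, hlt⟩ := Fin.ext h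
      rw [h, hodd, hi]
      have := hTsub j hlt
      simp only [Fin.eta] at this
      linarith
    intro i j hij
    have hne : (i : ℕ) ≠ j := fun h => hij (Fin.ext h)
    rcases lt_trichotomy (i : ℕ) j with h | h | h
    · by_cases h' : (j : ℕ) = i + 1
      · have hs : T i j = T j i := by simpa using hTsym.apply j i
        rw [hs, add_comm]
        exact hstep j i h'
      · rw [hTtri i j (by omega), mul_zero]
    · exact absurd h hne
    · by_cases h' : (i : ℕ) = j + 1
      · exact hstep i j h'
      · rw [hTtri i j (by omega), mul_zero]
  have hb0 : 0 < e2norm b := e2norm_pos hb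
  have hb0c : (e2norm b : ℂ) ≠ 0 := by exact_mod_cast hb0.ne'
  have hbV : b = (e2norm b : ℂ) • (V *ᵥ Pi.single i₀ 1) := by
    rw [hV1, smul_smul, mul_inv_cancel₀ hb0c, one_smul]
  -- the left eigenvector equation of `Q²`, read through the Lanczos relation
  have hrow : ∀ i, (W * V) i ᵥ* T.map (algebraMap ℝ ℂ) +
      ((βh : ℂ) * (W *ᵥ v) i) • Pi.single l 1 = ((q i ^ 2 : ℝ) : ℂ) • (W * V) i := by
    intro i
    funext j
    have h1 : (W * (Q ^ 2 * V) : Matrix (Fin n) (Fin k) ℂ) i j =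
        ((q i ^ 2 : ℝ) : ℂ) * (W * V) i j :=
      hWA (fun a => V a j) i
    rw [hrel, Matrix.mul_add, Matrix.mul_smul, Matrix.mul_vecMulVec, ← Matrix.mul_assoc] at h1
    simp only [Matrix.add_apply, Matrix.smul_apply, Matrix.vecMulVec_apply, smul_eq_mul] at h1
    simp only [Pi.add_apply, Pi.smul_apply, smul_eq_mul]
    rw [← h1, mul_assoc]
    rfl
  have hq0 : ∀ i, q i ≠ 0 := by
    intro i h0
    have h := hQ.det_eq_prod_eigenvalues
    rw [Finset.prod_eq_zero (Finset.mem_univ i) (by rw [← hq, h0]; simp)] at h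
    rw [h] at hQinv
    exact not_isUnit_zero hQinv
  have hWV : ∀ (x : Fin k → ℂ) i, (W *ᵥ (V *ᵥ x)) i = (W * V) i ⬝ᵥ x := by
    intro x i
    rw [Matrix.mulVec_mulVec]
    rfl
  have hTinv : T * T⁻¹ = 1 := by
    rw [herm_cfc_inv hTsym fun i => (hpos i).ne']
    calc _ = hTsym.cfc (fun t => t) * hTsym.cfc (fun t => t⁻¹) := by rw [herm_cfc_id]
      _ = 1 := by
        rw [herm_cfc_mul, herm_cfc_congr hTsym (g := fun _ => 1) fun i =>
          mul_inv_cancel₀ (hpos i).ne', herm_cfc_const, one_smul]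
  have hWb : ∀ i, (W *ᵥ b) i = (e2norm b : ℂ) * ((W * V) i ⬝ᵥ Pi.single i₀ 1) := by
    intro i
    conv_lhs => rw [hbV]
    rw [Matrix.mulVec_smul, Pi.smul_apply, hWV, smul_eq_mul]
  have hWr : ∀ i, (W *ᵥ r) i =
      (e2norm b : ℂ) * ((βh : ℂ) * (W *ᵥ v) i * (((-T⁻¹) l i₀ : ℝ) : ℂ)) := by
    intro i
    rw [← row_mul_apply (X := 1 - (q i ^ 2) • T⁻¹) (i₀ := i₀) (hrow i), hr, Matrix.mulVec_sub,
      Matrix.mulVec_smul, Pi.sub_apply, Pi.smul_apply, hWA, hWV, hWb, smul_eq_mul]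
    · have hm : (1 - (q i ^ 2) • T⁻¹).map (algebraMap ℝ ℂ) =
          1 - ((q i ^ 2 : ℝ) : ℂ) • T⁻¹.map (algebraMap ℝ ℂ) := by
        ext a c
        by_cases h : a = c <;> simp [h]
      rw [hm, Matrix.sub_mulVec, Matrix.smul_mulVec, Matrix.one_mulVec, dotProduct_sub,
        dotProduct_smul, smul_eq_mul]
      ring
    · rw [Matrix.mul_neg, Matrix.sub_mul, hTinv, Matrix.smul_mul, Matrix.one_mul]
      abel
  refine ⟨?_, ?_⟩
  · rw [← e2norm_isometry hWW, ← e2norm_isometry hWW r]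
    refine Real.sqrt_le_sqrt (Finset.sum_le_sum fun i _ => ?_)
    refine pow_le_pow_left₀ (norm_nonneg _) ?_ 2
    set S := hTsym.cfc fun t => (Real.sqrt t)⁻¹ with hS
    set G := hTsym.cfc fun t => (Real.sqrt t * (|q i| + Real.sqrt t))⁻¹ with hG
    -- from `1/|q| - 1/√t = -(q² - t) / (|q| √t (|q| + √t))`, multiplied by `q`
    have hX : Real.sign (q i) • (1 : Matrix (Fin k) (Fin k) ℝ) - q i • S =
        (q i ^ 2 • 1 - T) * (-Real.sign (q i) • G) := by
      have e1 : Real.sign (q i) • (1 : Matrix (Fin k) (Fin k) ℝ) - q i • S =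
          hTsym.cfc (fun t => Real.sign (q i) + (-q i) * (Real.sqrt t)⁻¹) := by
        rw [herm_cfc_add, herm_cfc_const, herm_cfc_smul, neg_smul, sub_eq_add_neg]
      have e2 : (q i ^ 2 • 1 - T) = hTsym.cfc (fun t => q i ^ 2 + (-1) * t) := by
        rw [herm_cfc_add, herm_cfc_const, herm_cfc_smul, herm_cfc_id, neg_one_smul, sub_eq_add_neg]
      rw [e1, e2, hG, ← herm_cfc_smul, herm_cfc_mul]
      refine herm_cfc_congr hTsym fun j => ?_
      have hs : 0 < Real.sqrt (hTsym.eigenvalues j) := Real.sqrt_pos.2 (hpos j)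
      have hs2 : Real.sqrt (hTsym.eigenvalues j) ^ 2 = hTsym.eigenvalues j :=
        Real.sq_sqrt (hpos j).le
      have hqp : 0 < |q i| := abs_pos.2 (hq0 i)
      have hsg : q i = Real.sign (q i) * |q i| := by
        rcases lt_or_gt_of_ne (hq0 i) with h | h
        · rw [Real.sign_of_neg h, abs_of_neg h]; ring
        · rw [Real.sign_of_pos h, abs_of_pos h]; ring
      set σ := Real.sqrt (hTsym.eigenvalues j)
      rw [← hs2, ← sq_abs (q i)]
      nth_rewrite 2 [hsg]
      field_simp
      ring
    have hE : (W *ᵥ ((hQ.cfc Real.sign) *ᵥ b - (e2norm b : ℂ) •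
        (Q *ᵥ (V *ᵥ (S.map (algebraMap ℝ ℂ) *ᵥ Pi.single i₀ 1))))) i =
        (e2norm b : ℂ) * ((βh : ℂ) * (W *ᵥ v) i * (((-Real.sign (q i) • G) l i₀ : ℝ) : ℂ)) := by
      rw [← row_mul_apply (i₀ := i₀) (hrow i) hX, Matrix.mulVec_sub, Matrix.mulVec_smul,
        Pi.sub_apply, Pi.smul_apply, hWQ, hWV, eigen_mul_cfc hQ, ← hW, hWb, smul_eq_mul]
      have hm : (Real.sign (q i) • 1 - q i • S).map (algebraMap ℝ ℂ) =
          (Real.sign (q i) : ℂ) • 1 - (q i : ℂ) • S.map (algebraMap ℝ ℂ) := by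
        ext a c
        by_cases h : a = c <;> simp [h]
      rw [hm, Matrix.sub_mulVec, Matrix.smul_mulVec, Matrix.smul_mulVec, Matrix.one_mulVec,
        dotProduct_sub, dotProduct_smul, dotProduct_smul, smul_eq_mul, smul_eq_mul]
      ring
    rw [hE, hWr]
    simp only [norm_mul, Complex.norm_real]
    refine mul_le_mul_of_nonneg_left (mul_le_mul_of_nonneg_left ?_ (by positivity)) (by positivity)
    have hsg : |Real.sign (q i)| = 1 := by
      rcases Real.sign_apply_eq_of_ne_zero (q i) (hq0 i) with h | h <;> simp [h]
    rw [Matrix.smul_apply, smul_eq_mul, Matrix.neg_apply, norm_neg, Real.norm_eq_abs,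
      Real.norm_eq_abs, abs_mul, abs_neg, hsg, one_mul]
    exact abs_cfc_entry_le_inv hTsym hpos hoff (abs_nonneg _) l i₀
  · have hspec : ∀ i, |q i| ≤ specNorm Q ∧ 1 ≤ specNorm Q⁻¹ * |q i| := by
      intro i
      refine abs_eigenvalue_bounds hQinv (x := ⇑(hQ.eigenvectorBasis i)) ?_
        (hQ.mulVec_eigenvectorBasis i)
      intro h0
      have h1 := (hQ.eigenvectorBasis).orthonormal.1 i
      have : hQ.eigenvectorBasis i = 0 := by
        ext j
        exact congrFun h0 j
      rw [this] at h1
      simp at h1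
    set M := specNorm Q with hM
    set N := specNorm Q⁻¹ with hN
    obtain ⟨i₁, -⟩ := Function.ne_iff.1 hb
    have hN0 : 0 < N := by
      have h1 := (hspec i₁).2
      have h2 := abs_pos.2 (hq0 i₁)
      by_contra h
      push Not at h
      nlinarith
    have hlow : ∀ i, N⁻¹ ≤ |q i| := fun i => by
      rw [inv_le_iff_one_le_mul₀ hN0, mul_comm]
      exact (hspec i).2
    have hmM : N⁻¹ ≤ M := (hlow i₁).trans (hspec i₁).1
    obtain ⟨p, hdeg, hp0, hpb⟩ := exists_chebyshev_poly (inv_pos.2 hN0) hmM hk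
    have hκ' : M / N⁻¹ = κ := by rw [hκ]; simp
    rw [hκ'] at hpb
    set ε := 2 * ((κ - 1) / (κ + 1)) ^ k with hε
    have hapos : ∀ i, 0 < q i ^ 2 := fun i => by have := hq0 i; positivity
    have halow : ∀ i, N⁻¹ ^ 2 ≤ q i ^ 2 := fun i => by
      rw [← sq_abs (q i)]
      exact pow_le_pow_left₀ (inv_pos.2 hN0).le (hlow i) 2
    have haup : ∀ i, q i ^ 2 ≤ M ^ 2 := fun i => by
      rw [← sq_abs (q i)]
      exact pow_le_pow_left₀ (abs_nonneg _) (hspec i).1 2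
    -- `p = 1 + X s`, and `s(Q²) b` lies in the Krylov space
    have hps : ∀ x, p.eval x = x * p.divX.eval x + 1 := by
      intro x
      have h := congrArg (eval x) p.X_mul_divX_add
      rw [eval_add, eval_mul, eval_X, eval_C, coeff_zero_eq_eval_zero, hp0] at h
      exact h.symm
    have hsdeg : p.divX.natDegree < k := by
      rw [natDegree_divX_eq_natDegree_tsub_one]
      omega
    obtain ⟨z, hz⟩ := krylov_poly hk hTtri hrel
      (fun j => (e2norm b : ℂ) * ((p.divX.coeff j : ℝ) : ℂ))
    have hWpow : ∀ (j : ℕ) x i,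
        (W *ᵥ ((Q ^ 2) ^ j *ᵥ x)) i = ((q i ^ 2 : ℝ) : ℂ) ^ j * (W *ᵥ x) i := by
      intro j
      induction j with
      | zero => intro x i; simp
      | succ j ih =>
        intro x i
        rw [pow_succ', ← Matrix.mulVec_mulVec, hWA, ih]
        ring
    have hWz : ∀ i, (W *ᵥ (V *ᵥ z)) i = ((p.divX.eval (q i ^ 2) : ℝ) : ℂ) * (W *ᵥ b) i := by
      intro i
      rw [hz, Matrix.mulVec_sum, Finset.sum_apply, hWb, ← hWV, eval_eq_sum_range' hsdeg,
        Complex.ofReal_sum, Finset.sum_mul]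
      refine Finset.sum_congr rfl fun j _ => ?_
      rw [Matrix.mulVec_smul, Pi.smul_apply, hWpow, smul_eq_mul, Complex.ofReal_mul,
        Complex.ofReal_pow (q i ^ 2) j]
      ring
    set x₀ : Fin k → ℂ := (e2norm b : ℂ) • (T⁻¹.map (algebraMap ℝ ℂ) *ᵥ Pi.single i₀ 1) with hx₀
    have hr' : r = b - Q ^ 2 *ᵥ (V *ᵥ x₀) := by
      rw [hr, hx₀, Matrix.mulVec_smul, Matrix.mulVec_smul]
    have hVr : Vᴴ *ᵥ r = 0 := by
      have hTc : T.map (algebraMap ℝ ℂ) * T⁻¹.map (algebraMap ℝ ℂ) = 1 := by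
        rw [← Matrix.map_mul, hTinv, Matrix.map_one _ (map_zero _) (map_one _)]
      have h1 : Vᴴ *ᵥ (Q ^ 2 *ᵥ (V *ᵥ x₀)) = (e2norm b : ℂ) • Pi.single i₀ 1 := by
        rw [Matrix.mulVec_mulVec, Matrix.mulVec_mulVec, Matrix.mul_assoc, hc, hx₀,
          Matrix.mulVec_smul, Matrix.mulVec_mulVec, hTc, Matrix.one_mulVec]
      have h2 : Vᴴ *ᵥ b = (e2norm b : ℂ) • Pi.single i₀ 1 := by
        conv_lhs => rw [hbV]
        rw [Matrix.mulVec_smul, Matrix.mulVec_mulVec, hVorth, Matrix.one_mulVec]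
      rw [hr', Matrix.mulVec_sub, h1, h2, sub_self]
    have hmin := galerkin_min (a := fun i => q i ^ 2) (p := fun i => p.eval (q i ^ 2))
      (R := W *ᵥ r) (D := W *ᵥ (V *ᵥ (z + x₀))) (B := W *ᵥ b) hapos
      (by
        intro i
        rw [hr', Matrix.mulVec_add V, Matrix.mulVec_add W, Matrix.mulVec_sub, Pi.sub_apply,
          Pi.add_apply, hWA, hWz, hps]
        push_cast
        ring)
      (by
        rw [star_mulVec_dotProduct, Matrix.mulVec_mulVec, hWW, Matrix.one_mulVec,
          star_mulVec_dotProduct, hVr, dotProduct_zero])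
    have hM0 : 0 < M := (inv_pos.2 hN0).trans_le hmM
    have hκ1 : 1 ≤ κ := by
      rw [hκ, ← inv_mul_cancel₀ hN0.ne']
      exact mul_le_mul_of_nonneg_right hmM hN0.le
    have hε0 : 0 ≤ ε := by
      have : 0 ≤ (κ - 1) / (κ + 1) := div_nonneg (by linarith) (by linarith)
      positivity
    have hfin : e2norm r ^ 2 ≤ (κ * ε * e2norm b) ^ 2 := by
      rw [← e2norm_isometry hWW r, ← e2norm_isometry hWW b, mul_pow, e2norm_sq, e2norm_sq]
      calc ∑ i, ‖(W *ᵥ r) i‖ ^ 2 ≤ ∑ i, M ^ 2 * (‖(W *ᵥ r) i‖ ^ 2 / q i ^ 2) := by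
            refine Finset.sum_le_sum fun i _ => ?_
            rw [← mul_div_assoc, le_div_iff₀ (hapos i), mul_comm]
            exact mul_le_mul_of_nonneg_right (haup i) (by positivity)
        _ = M ^ 2 * ∑ i, ‖(W *ᵥ r) i‖ ^ 2 / q i ^ 2 := by rw [Finset.mul_sum]
        _ ≤ M ^ 2 * ∑ i, p.eval (q i ^ 2) ^ 2 * ‖(W *ᵥ b) i‖ ^ 2 / q i ^ 2 :=
            mul_le_mul_of_nonneg_left hmin (by positivity)
        _ ≤ M ^ 2 * ∑ i, N ^ 2 * ε ^ 2 * ‖(W *ᵥ b) i‖ ^ 2 := by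
            refine mul_le_mul_of_nonneg_left (Finset.sum_le_sum fun i _ => ?_) (by positivity)
            rw [div_le_iff₀ (hapos i)]
            have h1 : p.eval (q i ^ 2) ^ 2 ≤ ε ^ 2 := by
              rw [← sq_abs]
              exact pow_le_pow_left₀ (abs_nonneg _) (hpb _ (halow i) (haup i)) 2
            have h2 : 1 ≤ N ^ 2 * q i ^ 2 := by
              have := mul_le_mul_of_nonneg_left (halow i) (sq_nonneg N)
              rwa [← mul_pow, mul_inv_cancel₀ hN0.ne', one_pow] at this
            calc p.eval (q i ^ 2) ^ 2 * ‖(W *ᵥ b) i‖ ^ 2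
                ≤ ε ^ 2 * ‖(W *ᵥ b) i‖ ^ 2 := mul_le_mul_of_nonneg_right h1 (by positivity)
              _ ≤ (N ^ 2 * q i ^ 2) * (ε ^ 2 * ‖(W *ᵥ b) i‖ ^ 2) :=
                  le_mul_of_one_le_left (by positivity) h2
              _ = _ := by ring
        _ = (κ * ε) ^ 2 * ∑ i, ‖(W *ᵥ b) i‖ ^ 2 := by
            rw [← Finset.mul_sum, hκ]
            ring
    have hle := (sq_le_sq₀ (e2norm_nonneg r) (by positivity)).1 hfin
    calc e2norm r ≤ κ * ε * e2norm b := hle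
      _ = _ := by rw [hε]; ring
end

section
/- Let A be an n×n Hermitian positive definite complex matrix. Then A^{−1/2} = (2/π) ∫₀^∞ (A + t² I)^{−1} dt, where the integral is the (entrywise / Bochner) improper integral over t ∈ [0, ∞) of the matrix-valued function t ↦ (A + t² I)^{−1}. -/
/-!
Diagonalising `B = U diag(b) U*` with `U` unitary and all `b k > 0` diagonalises everything else:
`A = (B * B)⁻¹ = U diag(b⁻²) U*`, hence `(A + t² I)⁻¹ = U diag(b² / (1 + (b t)²)) U*`. Each entry of
the integrand is therefore a fixed linear combination of the scalar functions
`b² / (1 + (b t)²)`, whose integral over `(0, ∞)` is `b π / 2` (substitute `s = b t` in the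
arctangent integral). Working from the eigenvalues of `B` makes an appeal to uniqueness of positive
square roots unnecessary.
-/

open Matrix MeasureTheory
open scoped ComplexOrder

lemma integrableOn_resolvent_scalar {b : ℝ} (hb : 0 < b) :
    IntegrableOn (fun t : ℝ => b ^ 2 * (1 + (b * t) ^ 2)⁻¹) (Set.Ioi 0) := by
  have h := (integrableOn_Ioi_comp_mul_left_iff (fun x : ℝ => (1 + x ^ 2)⁻¹) 0 hb).2
    integrable_inv_one_add_sq.integrableOn
  exact h.const_mul _

lemma integral_resolvent_scalar {b : ℝ} (hb : 0 < b) :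
    ∫ t in Set.Ioi (0 : ℝ), b ^ 2 * (1 + (b * t) ^ 2)⁻¹ = b * (Real.pi / 2) := by
  rw [integral_const_mul, integral_comp_mul_left_Ioi (fun x : ℝ => (1 + x ^ 2)⁻¹) 0 hb, mul_zero,
    integral_Ioi_inv_one_add_sq, Real.arctan_zero, smul_eq_mul]
  field_simp
  ring

/-- The resolvent `(A + t² I)⁻¹` in an eigenbasis of `A^{-1/2}`. -/
lemma resolvent_eq_of_diagonalization {n : ℕ} {A B U V : Matrix (Fin n) (Fin n) ℂ} {b : Fin n → ℝ}
    (hA : IsUnit A.det) (hBsq : B * B = A⁻¹) (hVU : V * U = 1) (hb : ∀ k, 0 < b k)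
    (hBd : B = U * diagonal (fun k => (b k : ℂ)) * V) (t : ℝ) :
    (A + ((t : ℂ) ^ 2) • 1)⁻¹ =
      U * diagonal (fun k => ((b k ^ 2 * (1 + (b k * t) ^ 2)⁻¹ : ℝ) : ℂ)) * V := by
  have hUV : U * V = 1 := mul_eq_one_comm.1 hVU
  have hmul : ∀ d e : Fin n → ℂ, (U * diagonal d * V) * (U * diagonal e * V) =
      U * diagonal (fun k => d k * e k) * V := by
    intro d e
    rw [← diagonal_mul_diagonal]
    calc _ = U * diagonal d * (V * U) * diagonal e * V := by simp only [Matrix.mul_assoc]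
      _ = _ := by rw [hVU]; simp only [Matrix.mul_assoc, Matrix.mul_one]
  have hone : U * diagonal (fun _ => (1 : ℂ)) * V = 1 := by
    rw [diagonal_one, Matrix.mul_one, hUV]
  have hb0 : ∀ k, (b k : ℂ) ≠ 0 := fun k => by exact_mod_cast (hb k).ne'
  have hAd : A = U * diagonal (fun k => ((b k : ℂ) ^ 2)⁻¹) * V := by
    rw [← nonsing_inv_nonsing_inv A hA, ← hBsq]
    apply inv_eq_right_inv
    rw [hBd, hmul, hmul, ← hone]
    congr 3
    funext k
    have := hb0 k
    field_simp
  have hsum : A + ((t : ℂ) ^ 2) • 1 =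
      U * diagonal (fun k => ((b k : ℂ) ^ 2)⁻¹ + (t : ℂ) ^ 2) * V := by
    rw [← diagonal_add, Matrix.mul_add, Matrix.add_mul, ← hAd, ← smul_one_eq_diagonal]
    simp [hUV]
  apply inv_eq_right_inv
  rw [hsum, hmul, ← hone]
  congr 3
  funext k
  have h1 := (hb k).ne'
  have h2 : (1 + (b k * t) ^ 2) ≠ 0 := by positivity
  have h3 : ((b k ^ 2)⁻¹ + t ^ 2) * (b k ^ 2 * (1 + (b k * t) ^ 2)⁻¹) = 1 := by
    field_simp
  exact_mod_cast h3

/-- Integral representation of the inverse square root of a Hermitian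
positive definite matrix: if `B` is the (unique) Hermitian positive definite matrix with
`B² = A⁻¹`, i.e. `B = A^{-1/2}`, then (entrywise)
`A^{-1/2} = (2/π) ∫₀^∞ (A + t² I)⁻¹ dt`. -/
theorem inv_sqrt_integral_representation {n : ℕ}
    (A : Matrix (Fin n) (Fin n) ℂ) (hA : A.PosDef)
    (B : Matrix (Fin n) (Fin n) ℂ) (hB : B.PosDef) (hBsq : B * B = A⁻¹) :
    ∀ i j, B i j = (2 / Real.pi : ℂ) *
      ∫ t in Set.Ioi (0 : ℝ), (A + ((t : ℂ) ^ 2) • 1)⁻¹ i j := by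
  intro i j
  obtain ⟨U, V, b, hVU, hb, hBd⟩ : ∃ (U V : Matrix (Fin n) (Fin n) ℂ) (b : Fin n → ℝ),
      V * U = 1 ∧ (∀ k, 0 < b k) ∧ B = U * diagonal (fun k => (b k : ℂ)) * V := by
    refine ⟨hB.1.eigenvectorUnitary, star (hB.1.eigenvectorUnitary : Matrix (Fin n) (Fin n) ℂ),
      hB.1.eigenvalues, Unitary.coe_star_mul_self _, hB.eigenvalues_pos, ?_⟩
    conv_lhs => rw [hB.1.spectral_theorem, Unitary.conjStarAlgAut_apply]
    rfl
  have hentry : ∀ d : Fin n → ℂ, (U * diagonal d * V) i j = ∑ k, U i k * V k j * d k := by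
    intro d
    rw [Matrix.mul_apply]
    exact Finset.sum_congr rfl fun k _ => by rw [mul_diagonal]; ring
  have hdet : IsUnit A.det := (isUnit_iff_isUnit_det A).1 hA.isUnit
  simp_rw [resolvent_eq_of_diagonalization hdet hBsq hVU hb hBd, hentry]
  rw [integral_finsetSum _ fun k _ => ((integrableOn_resolvent_scalar (hb k)).ofReal.const_mul _)]
  simp_rw [integral_const_mul, integral_complex_ofReal, integral_resolvent_scalar (hb _)]
  rw [hBd, hentry, Finset.mul_sum]
  refine Finset.sum_congr rfl fun k _ => ?_
  have hpi : (Real.pi : ℂ) ≠ 0 := by exact_mod_cast Real.pi_ne_zero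
  push_cast
  field_simp
end

section
/- Let Q be an n×n invertible Hermitian complex matrix and let φ : [0, ∞) → ℝ be a measurable function with 0 ≤ φ(t) ≤ 1 for all t. Then the matrix X = (2/π) ∫₀^∞ Q (t² I + Q²)^{−1} φ(t) dt is well defined (the integrand is integrable) and satisfies ‖X‖₂ ≤ 1. -/
/-!
Diagonalise `Q = U diag(λ) Uᴴ` with `U` unitary and `λ` real; invertibility of `Q` makes every
`λ k` nonzero, so `Q (t² + Q²)⁻¹ = U diag(λ k / (t² + λ k²)) Uᴴ` for every real `t`
(`mul_resolvent_eq`). Each entry of the integrand is therefore a finite linear combination of the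
scalar functions `λ k / (t² + λ k²) * φ t`, which are dominated by the Cauchy kernels
`|λ k| / (t² + λ k²)`, of integral `π / 2` over `(0, ∞)`. Integrating entrywise gives
`X = U diag(c) Uᴴ` with `|c k| ≤ (2 / π) (π / 2) = 1`, and unitary conjugation does not increase
the spectral norm.
-/

open Matrix MeasureTheory

lemma cauchyKernel_eq {l : ℝ} (hl : l ≠ 0) (t : ℝ) :
    |l| / (t ^ 2 + l ^ 2) = |l|⁻¹ * (1 + (|l|⁻¹ * t) ^ 2)⁻¹ := by
  have h : 0 < |l| := abs_pos.mpr hl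
  rw [← sq_abs l]
  field_simp
  ring

lemma integrable_cauchyKernel {l : ℝ} (hl : l ≠ 0) :
    Integrable (fun t : ℝ => |l| / (t ^ 2 + l ^ 2)) := by
  simp only [cauchyKernel_eq hl]
  exact (integrable_inv_one_add_sq.comp_mul_left' (inv_ne_zero (abs_ne_zero.mpr hl))).const_mul _

lemma integral_cauchyKernel {l : ℝ} (hl : l ≠ 0) :
    ∫ t in Set.Ioi (0 : ℝ), |l| / (t ^ 2 + l ^ 2) = Real.pi / 2 := by
  have h : 0 < |l| := abs_pos.mpr hl
  simp only [cauchyKernel_eq hl]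
  rw [integral_const_mul,
    integral_comp_mul_left_Ioi (fun x : ℝ => (1 + x ^ 2)⁻¹) 0 (inv_pos.mpr h)]
  simp [integral_Ioi_inv_one_add_sq, h.ne']

lemma norm_weighted_le {l : ℝ} {φ : ℝ → ℝ} (hφ : ∀ t : ℝ, 0 ≤ t → 0 ≤ φ t ∧ φ t ≤ 1)
    {t : ℝ} (ht : 0 < t) :
    ‖((l / (t ^ 2 + l ^ 2) * φ t : ℝ) : ℂ)‖ ≤ |l| / (t ^ 2 + l ^ 2) := by
  obtain ⟨h0, h1⟩ := hφ t ht.le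
  rw [Complex.norm_real, Real.norm_eq_abs, abs_mul, abs_div, abs_of_nonneg h0,
    abs_of_nonneg (by positivity : 0 ≤ t ^ 2 + l ^ 2)]
  exact mul_le_of_le_one_right (by positivity) h1

lemma integrableOn_weighted {l : ℝ} (hl : l ≠ 0) {φ : ℝ → ℝ} (hφm : Measurable φ)
    (hφ : ∀ t : ℝ, 0 ≤ t → 0 ≤ φ t ∧ φ t ≤ 1) :
    IntegrableOn (fun t : ℝ => ((l / (t ^ 2 + l ^ 2) * φ t : ℝ) : ℂ)) (Set.Ioi 0) := by
  refine Integrable.mono' (integrable_cauchyKernel hl).integrableOn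
    (Measurable.aestronglyMeasurable (by fun_prop)) ?_
  exact (ae_restrict_mem measurableSet_Ioi).mono fun t ht => norm_weighted_le hφ ht

/-- The eigenvalues of `X` have modulus at most one. -/
lemma norm_eigenvalue_le_one {l : ℝ} (hl : l ≠ 0) {φ : ℝ → ℝ}
    (hφ : ∀ t : ℝ, 0 ≤ t → 0 ≤ φ t ∧ φ t ≤ 1) :
    ‖(2 / Real.pi : ℂ) *
      ∫ t in Set.Ioi (0 : ℝ), ((l / (t ^ 2 + l ^ 2) * φ t : ℝ) : ℂ)‖ ≤ 1 := by
  have hint := norm_integral_le_of_norm_le (μ := volume.restrict (Set.Ioi (0 : ℝ)))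
    (integrable_cauchyKernel hl).integrableOn
    ((ae_restrict_mem measurableSet_Ioi).mono fun t ht => norm_weighted_le hφ ht)
  rw [integral_cauchyKernel hl] at hint
  have hpi := Real.pi_pos
  have hc : ‖(2 / Real.pi : ℂ)‖ = 2 / Real.pi := by
    simp [abs_of_pos hpi]
  rw [norm_mul, hc]
  calc 2 / Real.pi * _ ≤ 2 / Real.pi * (Real.pi / 2) := by gcongr
    _ = 1 := by field_simp

/-- The integrand matrix `Q (t² + Q²)⁻¹` is diagonal in any orthonormal eigenbasis of `Q`. -/
lemma mul_resolvent_eq {n : ℕ} {Q U : Matrix (Fin n) (Fin n) ℂ} {l : Fin n → ℝ}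
    (hU : Uᴴ * U = 1) (hQ : Q = U * diagonal (fun k => (l k : ℂ)) * Uᴴ)
    (hl : ∀ k, l k ≠ 0) (t : ℝ) :
    Q * (((t : ℂ) ^ 2) • 1 + Q ^ 2)⁻¹ =
      U * diagonal (fun k => ((l k / (t ^ 2 + l k ^ 2) : ℝ) : ℂ)) * Uᴴ := by
  have hU' : U * Uᴴ = 1 := mul_eq_one_comm.mp hU
  have hmul : ∀ A B : Matrix (Fin n) (Fin n) ℂ,
      (U * A * Uᴴ) * (U * B * Uᴴ) = U * (A * B) * Uᴴ := fun A B => by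
    calc (U * A * Uᴴ) * (U * B * Uᴴ) = U * A * (Uᴴ * U) * B * Uᴴ := by
          simp only [Matrix.mul_assoc]
      _ = U * (A * B) * Uᴴ := by rw [hU]; simp only [Matrix.mul_assoc, Matrix.one_mul]
  have hden : ∀ k, ((t : ℂ) ^ 2 + (l k : ℂ) ^ 2) ≠ 0 := fun k => by
    have h : 0 < l k ^ 2 := by have := hl k; positivity
    have h' : t ^ 2 + l k ^ 2 ≠ 0 := by positivity
    exact_mod_cast h'
  have hR : ((t : ℂ) ^ 2) • 1 + Q ^ 2 =
      U * diagonal (fun k => (t : ℂ) ^ 2 + (l k : ℂ) ^ 2) * Uᴴ := by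
    have h1 : ((t : ℂ) ^ 2) • (1 : Matrix (Fin n) (Fin n) ℂ) =
        U * (((t : ℂ) ^ 2) • 1) * Uᴴ := by simp [hU']
    rw [h1, hQ, pow_two (U * _ * Uᴴ), hmul, ← Matrix.add_mul, ← Matrix.mul_add,
      smul_one_eq_diagonal, diagonal_mul_diagonal, diagonal_add]
    simp only [pow_two]
  have hinv : (((t : ℂ) ^ 2) • 1 + Q ^ 2)⁻¹ =
      U * diagonal (fun k => ((t : ℂ) ^ 2 + (l k : ℂ) ^ 2)⁻¹) * Uᴴ := by
    apply Matrix.inv_eq_right_inv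
    rw [hR, hmul, diagonal_mul_diagonal]
    simp [hden, hU']
  rw [hinv, hQ, hmul, diagonal_mul_diagonal]
  simp [div_eq_mul_inv]

lemma conj_diagonal_apply {n : ℕ} (U : Matrix (Fin n) (Fin n) ℂ) (d : Fin n → ℂ) (i j : Fin n) :
    (U * diagonal d * Uᴴ) i j = ∑ k, U i k * star (U j k) * d k := by
  rw [Matrix.mul_apply]
  refine Finset.sum_congr rfl fun k _ => ?_
  rw [mul_diagonal, conjTranspose_apply]
  ring

open scoped Matrix.Norms.L2Operator in
lemma specNorm_conj_diagonal_le {n : ℕ} {U : Matrix (Fin n) (Fin n) ℂ}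
    (hU : U ∈ unitary (Matrix (Fin n) (Fin n) ℂ)) {d : Fin n → ℂ} (hd : ∀ k, ‖d k‖ ≤ 1) :
    specNorm (U * diagonal d * Uᴴ) ≤ 1 := by
  have h : ‖U * diagonal d * Uᴴ‖ ≤ 1 := by
    rw [← star_eq_conjTranspose, CStarRing.norm_mul_mem_unitary _ (Unitary.star_mem hU),
      CStarRing.norm_mem_unitary_mul _ hU, l2_opNorm_diagonal]
    exact (pi_norm_le_iff_of_nonneg zero_le_one).mpr hd
  exact h

/-- For an invertible Hermitian `Q` and measurable `φ : [0,∞) → [0,1]`, the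
matrix `X = (2/π) ∫₀^∞ Q (t² I + Q²)⁻¹ φ(t) dt` is well defined (the integrand is
integrable entrywise) and satisfies `‖X‖₂ ≤ 1`. -/
theorem integral_operator_norm_le_one {n : ℕ}
    (Q : Matrix (Fin n) (Fin n) ℂ) (hQ : Q.IsHermitian) (hQinv : IsUnit Q.det)
    (φ : ℝ → ℝ) (hφm : Measurable φ) (hφ : ∀ t : ℝ, 0 ≤ t → 0 ≤ φ t ∧ φ t ≤ 1) :
    (∀ i j : Fin n, IntegrableOn
        (fun t : ℝ => (Q * (((t : ℂ) ^ 2) • 1 + Q ^ 2)⁻¹ : Matrix (Fin n) (Fin n) ℂ) i j *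
          (φ t : ℂ)) (Set.Ioi 0)) ∧
      specNorm (Matrix.of fun i j : Fin n => (2 / Real.pi : ℂ) *
        ∫ t in Set.Ioi (0 : ℝ),
          (Q * (((t : ℂ) ^ 2) • 1 + Q ^ 2)⁻¹ : Matrix (Fin n) (Fin n) ℂ) i j *
            (φ t : ℂ)) ≤ 1 := by
  obtain ⟨U, l, hUmem, hQU⟩ : ∃ (U : Matrix (Fin n) (Fin n) ℂ) (l : Fin n → ℝ),
      U ∈ unitary (Matrix (Fin n) (Fin n) ℂ) ∧
        Q = U * diagonal (fun k => (l k : ℂ)) * Uᴴ :=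
    ⟨hQ.eigenvectorUnitary, hQ.eigenvalues, hQ.eigenvectorUnitary.2, by
      conv_lhs => rw [hQ.spectral_theorem, Unitary.conjStarAlgAut_apply]
      rfl⟩
  have hU : Uᴴ * U = 1 := Unitary.star_mul_self_of_mem hUmem
  have hl : ∀ k, l k ≠ 0 := by
    have hdet := hQinv.ne_zero
    rw [hQU, det_mul, det_mul, det_diagonal] at hdet
    have hprod := right_ne_zero_of_mul (left_ne_zero_of_mul hdet)
    intro k
    exact_mod_cast Finset.prod_ne_zero_iff.mp hprod k (Finset.mem_univ k)
  have hentry : ∀ (i j : Fin n) (t : ℝ),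
      (Q * (((t : ℂ) ^ 2) • 1 + Q ^ 2)⁻¹ : Matrix (Fin n) (Fin n) ℂ) i j * (φ t : ℂ) =
        ∑ k, U i k * star (U j k) * ((l k / (t ^ 2 + l k ^ 2) * φ t : ℝ) : ℂ) := by
    intro i j t
    rw [mul_resolvent_eq hU hQU hl, conj_diagonal_apply, Finset.sum_mul]
    refine Finset.sum_congr rfl fun k _ => ?_
    rw [Complex.ofReal_mul, mul_assoc]
  have hint : ∀ i j k : Fin n, IntegrableOn (fun t : ℝ =>
      U i k * star (U j k) * ((l k / (t ^ 2 + l k ^ 2) * φ t : ℝ) : ℂ)) (Set.Ioi 0) :=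
    fun i j k => (integrableOn_weighted (hl k) hφm hφ).const_mul _
  simp only [hentry]
  refine ⟨fun i j => integrable_finsetSum _ fun k _ => hint i j k, ?_⟩
  convert specNorm_conj_diagonal_le hUmem fun k => norm_eigenvalue_le_one (hl k) hφ using 2
  ext i j
  rw [conj_diagonal_apply, of_apply, integral_finsetSum _ fun k _ => hint i j k, Finset.mul_sum]
  refine Finset.sum_congr rfl fun k _ => ?_
  rw [integral_const_mul]
  ring
end

section
/- Let 0 < a ≤ b and m ≥ 1. For nonnegative integers i, j, let R_{i,j}(D) denote the set of functions g : D → ℝ of the form g(t) = p(t)/q(t) where p, q are real polynomials with deg p ≤ i, deg q ≤ j and q(t) ≠ 0 for all t ∈ D. Suppose s ∈ R_{m−1,m}([1, (b/a)²]) minimizes max_{t ∈ [1, (b/a)²]} |1 − √t · f(t)| over all f ∈ R_{m−1,m}([1, (b/a)²]) (i.e., s is the best relative approximation to t^{−1/2} on [1, (b/a)²] from R_{m−1,m}). Let D' = [−b/a, −1] ∪ [1, b/a]. Then the function r(t) := t·s(t²) minimizes max_{t ∈ D'} |sign(t) − g(t)| over all g ∈ R_{2m−1,2m}(D'); consequently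 the function t ↦ (t/a)·s((t/a)²) minimizes max_{t ∈ [−b,−a]∪[a,b]} |sign(t) − g(t)| over all g ∈ R_{2m−1,2m}([−b,−a]∪[a,b]). -/
/-!
Symmetrization turns an arbitrary competitor into an odd one without increasing the error.

Let `g = P/Q` be of type `(2m-1, 2m)` on `D' = [-B,-1] ∪ [1,B]`. For `t ∈ [1,B]` both
`g t = P(t)/Q(t)` and `-g(-t) = -P(-t)/Q(-t)` approximate `1` with error at most the error `E` of
`g`. The denominator `Q` has constant sign on each of the two intervals.

* If the two signs agree, the mediant `(P(t) - P(-t)) / (Q(t) + Q(-t))`, that is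
  (odd part of `P`) / (even part of `Q`), lies between the two fractions, so it is within `E` of `1`.
* If they differ, the same holds for `(P(t) + P(-t)) / (Q(t) - Q(-t))`, that is
  (even part of `P`) / (odd part of `Q`).

In both cases the mediant has the form `t * f (t ^ 2)` with `f` of type `(m-1, m)` on `[1, B²]`
(in the second case numerator and denominator are multiplied by `t`). Hence the error of `s` is at
most that of `f`, hence at most `E`; and the sign error of `t * s (t ^ 2)` is the relative error
of `s`. The statement on `[-b,-a] ∪ [a,b]` follows by scaling.
-/

open Polynomial

/-- `IsRatOn i j D g` : the function `g : ℝ → ℝ` agrees on `D` with a rational function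
`p/q` where `deg p ≤ i`, `deg q ≤ j` and `q` has no zero on `D`. This is membership in the
class `R_{i,j}(D)` of rational functions of type `(i, j)` on `D`. -/
def IsRatOn (i j : ℕ) (D : Set ℝ) (g : ℝ → ℝ) : Prop :=
  ∃ p q : Polynomial ℝ, p.natDegree ≤ i ∧ q.natDegree ≤ j ∧
    (∀ t ∈ D, q.eval t ≠ 0) ∧ ∀ t ∈ D, g t = p.eval t / q.eval t

/-! ### Closure properties of the rational classes -/

lemma IsRatOn.comp_mul {i j : ℕ} {D : Set ℝ} {g : ℝ → ℝ} (hg : IsRatOn i j D g) (c : ℝ) :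
    IsRatOn i j ((fun t => c * t) ⁻¹' D) (fun t => g (c * t)) := by
  obtain ⟨p, q, hp, hq, h0, h⟩ := hg
  have hdeg : ∀ r : ℝ[X], (r.comp (C c * X)).natDegree ≤ r.natDegree := fun r =>
    natDegree_comp_le.trans
      ((Nat.mul_le_mul_left _ ((natDegree_C_mul_le c X).trans natDegree_X_le)).trans
        (mul_one _).le)
  refine ⟨p.comp (C c * X), q.comp (C c * X), (hdeg p).trans hp, (hdeg q).trans hq, ?_, ?_⟩
  · intro t ht
    simpa using h0 _ ht
  · intro t ht
    simpa using h _ ht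

lemma IsRatOn.congr_set {i j : ℕ} {D D' : Set ℝ} {g g' : ℝ → ℝ} (hg : IsRatOn i j D g)
    (hD : ∀ t ∈ D', t ∈ D) (hgg : ∀ t ∈ D', g' t = g t) : IsRatOn i j D' g' := by
  obtain ⟨p, q, hp, hq, h0, h⟩ := hg
  exact ⟨p, q, hp, hq, fun t ht => h0 t (hD t ht), fun t ht => (hgg t ht).trans (h t (hD t ht))⟩

lemma IsRatOn.continuousOn {i j : ℕ} {D : Set ℝ} {g : ℝ → ℝ} (hg : IsRatOn i j D g) :
    ContinuousOn g D := by
  obtain ⟨p, q, -, -, h0, h⟩ := hg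
  exact (p.continuous.continuousOn.div q.continuous.continuousOn h0).congr h

/-! ### Even and odd parts of polynomials -/

lemma sum_range_two_mul (f : ℕ → ℝ) (n : ℕ) :
    ∑ i ∈ Finset.range (2 * n), f i = ∑ i ∈ Finset.range n, (f (2 * i) + f (2 * i + 1)) := by
  induction n with
  | zero => simp
  | succ n ih =>
    rw [Nat.mul_succ, Finset.sum_range_succ, Finset.sum_range_succ, ih, Finset.sum_range_succ]
    ring

lemma exists_even_odd (P : ℝ[X]) {n : ℕ} (hn : 1 ≤ n) (hP : P.natDegree ≤ 2 * n - 1) :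
    ∃ A B : ℝ[X], A.natDegree ≤ n - 1 ∧ B.natDegree ≤ n - 1 ∧
      ∀ t, P.eval t = A.eval (t ^ 2) + t * B.eval (t ^ 2) := by
  refine ⟨∑ i ∈ Finset.range n, monomial i (P.coeff (2 * i)),
    ∑ i ∈ Finset.range n, monomial i (P.coeff (2 * i + 1)), ?_, ?_, ?_⟩
  · refine natDegree_sum_le_of_forall_le _ _ fun i hi => (natDegree_monomial_le _).trans ?_
    have := Finset.mem_range.mp hi
    omega
  · refine natDegree_sum_le_of_forall_le _ _ fun i hi => (natDegree_monomial_le _).trans ?_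
    have := Finset.mem_range.mp hi
    omega
  · intro t
    rw [eval_eq_sum_range' (show P.natDegree < 2 * n by omega), sum_range_two_mul,
      eval_finsetSum, eval_finsetSum, Finset.mul_sum, ← Finset.sum_add_distrib]
    refine Finset.sum_congr rfl fun i _ => ?_
    simp only [eval_monomial]
    ring

lemma exists_even_odd' (Q : ℝ[X]) {n : ℕ} (hn : 1 ≤ n) (hQ : Q.natDegree ≤ 2 * n) :
    ∃ A B : ℝ[X], A.natDegree ≤ n ∧ B.natDegree ≤ n - 1 ∧
      ∀ t, Q.eval t = A.eval (t ^ 2) + t * B.eval (t ^ 2) := by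
  obtain ⟨A, B, hA, hB, h⟩ := exists_even_odd Q.divX hn
    (by rw [natDegree_divX_eq_natDegree_tsub_one]; omega)
  refine ⟨X * B + C (Q.coeff 0), A, ?_, hA, fun t => ?_⟩
  · rw [natDegree_add_C]
    have h1 := natDegree_mul_le (p := (X : ℝ[X])) (q := B)
    have h2 := natDegree_X_le (R := ℝ)
    omega
  · conv_lhs => rw [← divX_mul_X_add Q]
    simp only [eval_add, eval_mul, eval_X, eval_C, h]
    ring

/-! ### Symmetrization by mediants -/

/-- A polynomial without zeros on an interval has constant sign there. -/
lemma mul_eval_pos (Q : ℝ[X]) {u v x y : ℝ} (h0 : ∀ t ∈ Set.Icc u v, Q.eval t ≠ 0)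
    (hx : x ∈ Set.Icc u v) (hy : y ∈ Set.Icc u v) : 0 < Q.eval x * Q.eval y := by
  have hiv := isPreconnected_Icc.intermediate_value hx hy Q.continuous.continuousOn
  have hiv' := isPreconnected_Icc.intermediate_value hy hx Q.continuous.continuousOn
  by_contra hle
  rcases lt_or_gt_of_ne (h0 x hx) with h1 | h1 <;> rcases lt_or_gt_of_ne (h0 y hy) with h2 | h2
  · exact hle (mul_pos_of_neg_of_neg h1 h2)
  · obtain ⟨t, ht, ht0⟩ := hiv ⟨h1.le, h2.le⟩
    exact h0 t ht ht0
  · obtain ⟨t, ht, ht0⟩ := hiv' ⟨h2.le, h1.le⟩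
    exact h0 t ht ht0
  · exact hle (mul_pos h1 h2)

/-- The mediant of two fractions whose denominators have the same sign lies between them; hence
it is within `E` of `1` if both fractions are. -/
lemma abs_one_sub_mediant_le {p₁ q₁ p₂ q₂ E : ℝ} (hq : 0 < q₁ * q₂)
    (h₁ : |1 - p₁ / q₁| ≤ E) (h₂ : |1 - p₂ / q₂| ≤ E) :
    q₁ + q₂ ≠ 0 ∧ |1 - (p₁ + p₂) / (q₁ + q₂)| ≤ E := by
  have hq₁ : q₁ ≠ 0 := left_ne_zero_of_mul hq.ne'
  have hq₂ : q₂ ≠ 0 := right_ne_zero_of_mul hq.ne'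
  have hadd : |q₁ + q₂| = |q₁| + |q₂| := by
    rcases pos_and_pos_or_neg_and_neg_of_mul_pos hq with ⟨h, h'⟩ | ⟨h, h'⟩
    · rw [abs_of_pos h, abs_of_pos h', abs_of_pos (add_pos h h')]
    · rw [abs_of_neg h, abs_of_neg h', abs_of_neg (add_neg h h')]
      ring
  have hpos : 0 < |q₁ + q₂| := by
    rw [hadd]
    positivity
  have hne : q₁ + q₂ ≠ 0 := abs_pos.mp hpos
  refine ⟨hne, ?_⟩
  rw [one_sub_div hq₁, abs_div, div_le_iff₀ (abs_pos.mpr hq₁)] at h₁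
  rw [one_sub_div hq₂, abs_div, div_le_iff₀ (abs_pos.mpr hq₂)] at h₂
  rw [one_sub_div hne, abs_div, div_le_iff₀ hpos, hadd]
  calc |q₁ + q₂ - (p₁ + p₂)| = |(q₁ - p₁) + (q₂ - p₂)| := by ring_nf
    _ ≤ |q₁ - p₁| + |q₂ - p₂| := abs_add_le _ _
    _ ≤ E * (|q₁| + |q₂|) := by linarith

/-- Every rational approximation `P / Q` of the sign function with error at most `E` yields an
approximation of `t ↦ 1 / √t` of type `(m-1, m)` with relative error at most `E`. -/
lemma exists_symmetrized {B E : ℝ} {m : ℕ} (hm : 1 ≤ m) (hB : 1 ≤ B) {P Q : ℝ[X]}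
    (hP : P.natDegree ≤ 2 * m - 1) (hQ : Q.natDegree ≤ 2 * m)
    (h0 : ∀ t ∈ Set.Icc (-B) (-1) ∪ Set.Icc 1 B, Q.eval t ≠ 0)
    (hE : ∀ t ∈ Set.Icc (-B) (-1) ∪ Set.Icc 1 B, |Real.sign t - P.eval t / Q.eval t| ≤ E) :
    ∃ f, IsRatOn (m - 1) m (Set.Icc 1 (B ^ 2)) f ∧
      ∀ x ∈ Set.Icc 1 (B ^ 2), |1 - √x * f x| ≤ E := by
  obtain ⟨Pe, Po, hPe, hPo, hPt⟩ := exists_even_odd P hm hP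
  obtain ⟨Qe, Qo, hQe, hQo, hQt⟩ := exists_even_odd' Q hm hQ
  have hpos : ∀ t ∈ Set.Icc 1 B, |1 - P.eval t / Q.eval t| ≤ E := fun t ht => by
    have := hE t (Or.inr ht)
    rwa [Real.sign_of_pos (by linarith [ht.1])] at this
  have hmem : ∀ t ∈ Set.Icc 1 B, -t ∈ Set.Icc (-B) (-1) := fun t ht =>
    ⟨neg_le_neg ht.2, neg_le_neg ht.1⟩
  have hneg : ∀ t ∈ Set.Icc 1 B, |-1 - P.eval (-t) / Q.eval (-t)| ≤ E := fun t ht => by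
    have := hE (-t) (Or.inl (hmem t ht))
    rwa [Real.sign_of_neg (by linarith [ht.1])] at this
  have hsqrt : ∀ x ∈ Set.Icc 1 (B ^ 2), √x ∈ Set.Icc 1 B ∧ √x ^ 2 = x := fun x hx =>
    ⟨⟨Real.one_le_sqrt.mpr hx.1, Real.sqrt_le_iff.mpr ⟨by linarith, hx.2⟩⟩,
      Real.sq_sqrt (by linarith [hx.1])⟩
  have hone : (1 : ℝ) ∈ Set.Icc 1 B := ⟨le_rfl, hB⟩
  have hsame : ∀ t ∈ Set.Icc 1 B, 0 < Q.eval t * Q.eval 1 := fun t ht =>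
    mul_eval_pos Q (fun u hu => h0 u (Or.inr hu)) ht hone
  have hsame' : ∀ t ∈ Set.Icc 1 B, 0 < Q.eval (-t) * Q.eval (-1) := fun t ht =>
    mul_eval_pos Q (fun u hu => h0 u (Or.inl hu)) (hmem t ht) (hmem 1 hone)
  have hcross : ∀ t ∈ Set.Icc 1 B,
      0 < (Q.eval t * Q.eval (-t)) * (Q.eval 1 * Q.eval (-1)) := fun t ht => by
    have := mul_pos (hsame t ht) (hsame' t ht)
    linarith
  have hQQ : Q.eval 1 * Q.eval (-1) ≠ 0 :=
    mul_ne_zero (h0 1 (Or.inr hone)) (h0 (-1) (Or.inl (hmem 1 hone)))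
  rcases lt_or_gt_of_ne hQQ with hlt | hgt
  · -- `Q` has opposite signs on the two intervals.
    have key : ∀ x ∈ Set.Icc 1 (B ^ 2), Qo.eval x ≠ 0 ∧
        |1 - √x * (Pe.eval x / (x * Qo.eval x))| ≤ E := by
      intro x hx
      obtain ⟨ht, htx⟩ := hsqrt x hx
      have htp : 0 < √x := by linarith [ht.1]
      have hs : 0 < Q.eval √x * -Q.eval (-√x) := by
        have := neg_of_mul_pos_left (hcross _ ht) hlt.le
        linarith
      have h2 : |1 - P.eval (-√x) / -Q.eval (-√x)| ≤ E := by
        rw [← abs_neg]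
        convert hneg _ ht using 2
        rw [div_neg]
        ring
      obtain ⟨hne, hle⟩ := abs_one_sub_mediant_le hs (hpos _ ht) h2
      have hden : Q.eval √x + -Q.eval (-√x) = 2 * √x * Qo.eval x := by
        rw [hQt, hQt, neg_sq, htx]
        ring
      have hnum : P.eval √x + P.eval (-√x) = 2 * Pe.eval x := by
        rw [hPt, hPt, neg_sq, htx]
        ring
      rw [hden] at hne
      have hQx : Qo.eval x ≠ 0 := right_ne_zero_of_mul hne
      refine ⟨hQx, ?_⟩
      rw [hden, hnum] at hle
      convert hle using 3
      have hxx : x * Qo.eval x = √x * (√x * Qo.eval x) := by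
        rw [← mul_assoc, ← sq, htx]
      rw [hxx]
      field_simp
    refine ⟨fun x => Pe.eval x / (x * Qo.eval x), ⟨Pe, X * Qo, hPe, ?_, ?_, ?_⟩,
      fun x hx => (key x hx).2⟩
    · have h1 := natDegree_mul_le (p := (X : ℝ[X])) (q := Qo)
      have h2 := natDegree_X_le (R := ℝ)
      omega
    · intro x hx
      rw [eval_mul, eval_X]
      exact mul_ne_zero (by linarith [hx.1]) (key x hx).1
    · intro x _
      simp
  · -- `Q` has the same sign on both intervals.
    have key : ∀ x ∈ Set.Icc 1 (B ^ 2), Qe.eval x ≠ 0 ∧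
        |1 - √x * (Po.eval x / Qe.eval x)| ≤ E := by
      intro x hx
      obtain ⟨ht, htx⟩ := hsqrt x hx
      have hs : 0 < Q.eval √x * Q.eval (-√x) := pos_of_mul_pos_left (hcross _ ht) hgt.le
      have h2 : |1 - -P.eval (-√x) / Q.eval (-√x)| ≤ E := by
        rw [← abs_neg]
        convert hneg _ ht using 2
        rw [neg_div]
        ring
      obtain ⟨hne, hle⟩ := abs_one_sub_mediant_le hs (hpos _ ht) h2
      have hden : Q.eval √x + Q.eval (-√x) = 2 * Qe.eval x := by
        rw [hQt, hQt, neg_sq, htx]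
        ring
      have hnum : P.eval √x + -P.eval (-√x) = 2 * (√x * Po.eval x) := by
        rw [hPt, hPt, neg_sq, htx]
        ring
      rw [hden] at hne
      refine ⟨right_ne_zero_of_mul hne, ?_⟩
      rwa [hden, hnum, mul_div_mul_left _ _ two_ne_zero, mul_div_assoc] at hle
    exact ⟨fun x => Po.eval x / Qe.eval x,
      ⟨Po, Qe, hPo, hQe, fun x hx => (key x hx).1, fun x _ => rfl⟩, fun x hx => (key x hx).2⟩

/-! ### The normalized problem on `[-B,-1] ∪ [1,B]` -/

/-- The sign error at `t` of the odd function `t * s (t ^ 2)` is the relative error of `s`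
at `t ^ 2`. -/
lemma abs_sign_sub_odd (s : ℝ → ℝ) {t : ℝ} (ht : t ≠ 0) :
    |Real.sign t - t * s (t ^ 2)| = |1 - √(t ^ 2) * s (t ^ 2)| := by
  rw [Real.sqrt_sq_eq_abs]
  rcases lt_or_gt_of_ne ht with h | h
  · rw [Real.sign_of_neg h, abs_of_neg h, ← abs_neg]
    ring_nf
  · rw [Real.sign_of_pos h, abs_of_pos h]

lemma bddAbove_sign_error {i j : ℕ} {B : ℝ} {g : ℝ → ℝ}
    (hg : IsRatOn i j (Set.Icc (-B) (-1) ∪ Set.Icc 1 B) g) :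
    BddAbove ((fun t : ℝ => |Real.sign t - g t|) '' (Set.Icc (-B) (-1) ∪ Set.Icc 1 B)) := by
  have hc : ContinuousOn (fun t : ℝ => 1 + |g t|) (Set.Icc (-B) (-1) ∪ Set.Icc 1 B) :=
    continuousOn_const.add hg.continuousOn.abs
  obtain ⟨M, hM⟩ := (isCompact_Icc.union isCompact_Icc).bddAbove_image hc
  refine ⟨M, ?_⟩
  rintro _ ⟨t, ht, rfl⟩
  refine le_trans ?_ (hM ⟨t, ht, rfl⟩)
  refine (abs_sub _ _).trans ?_
  have : |Real.sign t| ≤ 1 := by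
    rcases Real.sign_apply_eq t with h | h | h <;> simp [h]
  linarith

lemma best_sign_normalized {B : ℝ} (hB : 1 ≤ B) {m : ℕ} (hm : 1 ≤ m) {s : ℝ → ℝ}
    (hs : IsRatOn (m - 1) m (Set.Icc 1 (B ^ 2)) s)
    (hbest : ∀ f : ℝ → ℝ, IsRatOn (m - 1) m (Set.Icc 1 (B ^ 2)) f →
      sSup ((fun t : ℝ => |1 - √t * s t|) '' Set.Icc 1 (B ^ 2)) ≤
        sSup ((fun t : ℝ => |1 - √t * f t|) '' Set.Icc 1 (B ^ 2))) :
    IsRatOn (2 * m - 1) (2 * m) (Set.Icc (-B) (-1) ∪ Set.Icc 1 B) (fun t => t * s (t ^ 2)) ∧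
      ∀ g : ℝ → ℝ, IsRatOn (2 * m - 1) (2 * m) (Set.Icc (-B) (-1) ∪ Set.Icc 1 B) g →
        sSup ((fun t : ℝ => |Real.sign t - t * s (t ^ 2)|) ''
            (Set.Icc (-B) (-1) ∪ Set.Icc 1 B)) ≤
          sSup ((fun t : ℝ => |Real.sign t - g t|) '' (Set.Icc (-B) (-1) ∪ Set.Icc 1 B)) := by
  have hsq : ∀ t ∈ Set.Icc (-B) (-1) ∪ Set.Icc 1 B, t ≠ 0 ∧ t ^ 2 ∈ Set.Icc 1 (B ^ 2) := by
    rintro t (ht | ht)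
    · exact ⟨by linarith [ht.2], by nlinarith [ht.2], by nlinarith [ht.1, ht.2]⟩
    · exact ⟨by linarith [ht.1], by nlinarith [ht.1], by nlinarith [ht.1, ht.2]⟩
  constructor
  · obtain ⟨p, q, hp, hq, h0, h⟩ := hs
    refine ⟨X * p.comp (X ^ 2), q.comp (X ^ 2), ?_, ?_, ?_, ?_⟩
    · have h1 := natDegree_mul_le (p := (X : ℝ[X])) (q := p.comp (X ^ 2))
      have h2 := natDegree_X_le (R := ℝ)
      rw [natDegree_comp, natDegree_X_pow] at h1
      omega
    · rw [natDegree_comp, natDegree_X_pow]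
      omega
    · intro t ht
      simpa using h0 _ (hsq t ht).2
    · intro t ht
      simp only [h _ (hsq t ht).2, eval_mul, eval_X, eval_comp, eval_pow, mul_div_assoc]
  · intro g hg
    have hbdd := bddAbove_sign_error hg
    obtain ⟨P, Q, hP, hQ, h0, h⟩ := hg
    obtain ⟨f, hf, hfE⟩ := exists_symmetrized hm hB hP hQ h0
      (fun t ht => by
        rw [← h t ht]
        exact le_csSup hbdd ⟨t, ht, rfl⟩)
    have hne : (Set.Icc 1 (B ^ 2)).Nonempty := ⟨1, le_rfl, by nlinarith⟩
    have hfin : sSup ((fun t : ℝ => |1 - √t * s t|) '' Set.Icc 1 (B ^ 2)) ≤ _ :=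
      (hbest f hf).trans (csSup_le (hne.image _) (by
        rintro _ ⟨x, hx, rfl⟩
        exact hfE x hx))
    have hsb : BddAbove ((fun t : ℝ => |1 - √t * s t|) '' Set.Icc 1 (B ^ 2)) :=
      isCompact_Icc.bddAbove_image
        (continuousOn_const.sub (Real.continuous_sqrt.continuousOn.mul hs.continuousOn)).abs
    refine csSup_le (Set.Nonempty.image _ ⟨1, Or.inr ⟨le_rfl, hB⟩⟩) ?_
    rintro _ ⟨t, ht, rfl⟩
    refine le_trans ?_ hfin
    simp only [abs_sign_sub_odd s (hsq t ht).1]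
    exact le_csSup hsb ⟨t ^ 2, (hsq t ht).2, rfl⟩

/-! ### Scaling -/

lemma sign_mul_pos {a : ℝ} (ha : 0 < a) (t : ℝ) : Real.sign (a * t) = Real.sign t := by
  rcases lt_trichotomy t 0 with h | rfl | h
  · rw [Real.sign_of_neg h, Real.sign_of_neg (mul_neg_of_pos_of_neg ha h)]
  · simp
  · rw [Real.sign_of_pos h, Real.sign_of_pos (mul_pos ha h)]

lemma sign_div_pos {a : ℝ} (ha : 0 < a) (t : ℝ) : Real.sign (t / a) = Real.sign t := by
  rw [← inv_mul_eq_div, sign_mul_pos (inv_pos.mpr ha)]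

lemma div_mem_sign_domain {a b t : ℝ} (ha : 0 < a) (ht : t ∈ Set.Icc (-b) (-a) ∪ Set.Icc a b) :
    t / a ∈ Set.Icc (-(b / a)) (-1) ∪ Set.Icc 1 (b / a) := by
  rcases ht with ht | ht
  · refine Or.inl ⟨?_, ?_⟩
    · rw [← neg_div]
      exact div_le_div_of_nonneg_right ht.1 ha.le
    · rw [div_le_iff₀ ha]
      linarith [ht.2]
  · exact Or.inr ⟨(one_le_div ha).mpr ht.1, div_le_div_of_nonneg_right ht.2 ha.le⟩

lemma mul_mem_sign_domain {a b t : ℝ} (ha : 0 < a)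
    (ht : t ∈ Set.Icc (-(b / a)) (-1) ∪ Set.Icc 1 (b / a)) :
    a * t ∈ Set.Icc (-b) (-a) ∪ Set.Icc a b := by
  have hb : a * (b / a) = b := mul_div_cancel₀ b ha.ne'
  rcases ht with ht | ht
  · exact Or.inl ⟨by nlinarith [ht.1], by nlinarith [ht.2]⟩
  · exact Or.inr ⟨by nlinarith [ht.1], by nlinarith [ht.2]⟩

/-- **Zolotarev.** If `s ∈ R_{m-1,m}([1,(b/a)²])` is the best relative
approximation to `t^{-1/2}` on `[1,(b/a)²]` (i.e. it minimizes `max |1 - √t · f(t)|`),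
then `r(t) = t·s(t²)` is the best approximation to the sign function on
`D' = [-b/a,-1] ∪ [1,b/a]` from `R_{2m-1,2m}(D')`, and consequently
`t ↦ (t/a)·s((t/a)²)` is the best approximation to the sign function on
`[-b,-a] ∪ [a,b]` from `R_{2m-1,2m}([-b,-a] ∪ [a,b])`. -/
theorem zolotarev_best_sign_approximation (a b : ℝ) (ha : 0 < a) (hab : a ≤ b)
    (m : ℕ) (hm : 1 ≤ m) (s : ℝ → ℝ)
    (hs : IsRatOn (m - 1) m (Set.Icc 1 ((b / a) ^ 2)) s)
    (hbest : ∀ f : ℝ → ℝ, IsRatOn (m - 1) m (Set.Icc 1 ((b / a) ^ 2)) f →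
      sSup ((fun t : ℝ => |1 - Real.sqrt t * s t|) '' Set.Icc 1 ((b / a) ^ 2)) ≤
        sSup ((fun t : ℝ => |1 - Real.sqrt t * f t|) '' Set.Icc 1 ((b / a) ^ 2))) :
    (IsRatOn (2 * m - 1) (2 * m) (Set.Icc (-(b / a)) (-1) ∪ Set.Icc 1 (b / a))
        (fun t => t * s (t ^ 2)) ∧
      ∀ g : ℝ → ℝ,
        IsRatOn (2 * m - 1) (2 * m) (Set.Icc (-(b / a)) (-1) ∪ Set.Icc 1 (b / a)) g →
        sSup ((fun t : ℝ => |Real.sign t - t * s (t ^ 2)|) ''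
            (Set.Icc (-(b / a)) (-1) ∪ Set.Icc 1 (b / a))) ≤
          sSup ((fun t : ℝ => |Real.sign t - g t|) ''
            (Set.Icc (-(b / a)) (-1) ∪ Set.Icc 1 (b / a)))) ∧
    (IsRatOn (2 * m - 1) (2 * m) (Set.Icc (-b) (-a) ∪ Set.Icc a b)
        (fun t => (t / a) * s ((t / a) ^ 2)) ∧
      ∀ g : ℝ → ℝ,
        IsRatOn (2 * m - 1) (2 * m) (Set.Icc (-b) (-a) ∪ Set.Icc a b) g →
        sSup ((fun t : ℝ => |Real.sign t - (t / a) * s ((t / a) ^ 2)|) ''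
            (Set.Icc (-b) (-a) ∪ Set.Icc a b)) ≤
          sSup ((fun t : ℝ => |Real.sign t - g t|) ''
            (Set.Icc (-b) (-a) ∪ Set.Icc a b))) := by
  have hB : 1 ≤ b / a := (one_le_div ha).mpr hab
  obtain ⟨h1, h2⟩ := best_sign_normalized hB hm hs hbest
  refine ⟨⟨h1, h2⟩, ?_, ?_⟩
  · refine (h1.comp_mul a⁻¹).congr_set (fun t ht => ?_) (fun t _ => ?_)
    · rw [Set.mem_preimage, inv_mul_eq_div]
      exact div_mem_sign_domain ha ht
    · simp only [inv_mul_eq_div]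
  · intro g hg
    have hg' : IsRatOn (2 * m - 1) (2 * m) (Set.Icc (-(b / a)) (-1) ∪ Set.Icc 1 (b / a))
        (fun t => g (a * t)) :=
      (hg.comp_mul a).congr_set (fun t ht => mul_mem_sign_domain ha ht) (fun _ _ => rfl)
    refine le_trans (le_of_eq ?_) ((h2 _ hg').trans (le_of_eq ?_))
    · congr 1
      ext y
      constructor
      · rintro ⟨t, ht, rfl⟩
        exact ⟨t / a, div_mem_sign_domain ha ht, by simp only [sign_div_pos ha]⟩
      · rintro ⟨t, ht, rfl⟩
        refine ⟨a * t, mul_mem_sign_domain ha ht, ?_⟩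
        simp only [mul_div_cancel_left₀ t ha.ne', sign_mul_pos ha]
    · congr 1
      ext y
      constructor
      · rintro ⟨t, ht, rfl⟩
        exact ⟨a * t, mul_mem_sign_domain ha ht, by simp only [sign_mul_pos ha]⟩
      · rintro ⟨t, ht, rfl⟩
        refine ⟨t / a, div_mem_sign_domain ha ht, ?_⟩
        simp only [mul_div_cancel₀ t ha.ne', sign_div_pos ha]
end
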